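/- Suppose Γ is a configuration satisfying the Working Conditions with at least one bad vertex, let φ be an embedding of Γ into ℤ^N, let x be a bad vertex, and suppose the restriction of φ to the vertices of the extended bad part is semi-standard at x. If v is a vertex with v ≠ x and supp(φ(v)) ∩ supp(φ(x)) ≠ ∅, then v is adjacent to x. -/

import Mathlib

namespace LensPaper

/-- A finite weighted simple graph: the combinatorial data underlying a configuration
(a disjoint union of weighted linear graphs).  The fact that every connected component
is a path is recorded separately by `Config.IsLinear`. -/
structure Config where
  V : Type
  fin : Fintype V
  deq : DecidableEq V
  graph : SimpleGraph V
  adjDec : DecidableRel graph.Adj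
  w : V → ℤ

attribute [instance] Config.fin Config.deq Config.adjDec

namespace Config

/-- The degree of a vertex. -/
noncomputable def deg (C : Config) (v : C.V) : ℕ := (C.graph.neighborSet v).ncard

/-- A configuration: every component is a path, i.e. all degrees are at most `2` and the
graph is acyclic. -/
def IsLinear (C : Config) : Prop :=
  (∀ v : C.V, C.deg v ≤ 2) ∧ C.graph.IsAcyclic

/-- The adjusted weight `w'(v) = w(v) - deg(v)`. -/
noncomputable def adjw (C : Config) (v : C.V) : ℤ := C.w v - C.deg v

/-- A vertex is bad if it is adjacent to two distinct vertices of positive adjusted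
weight. -/
def IsBad (C : Config) (x : C.V) : Prop :=
  ∃ u v : C.V, u ≠ v ∧ C.graph.Adj x u ∧ C.graph.Adj x v ∧ 0 < C.adjw u ∧ 0 < C.adjw v

/-- A leaf: a vertex of degree at most one. -/
def IsLeaf (C : Config) (v : C.V) : Prop := C.deg v ≤ 1

/-- `v 0, v 1, …, v m` is a chain of consecutive (distinct) vertices. -/
def IsChain (C : Config) (m : ℕ) (v : ℕ → C.V) : Prop :=
  (∀ i ≤ m, ∀ j ≤ m, v i = v j → i = j) ∧ ∀ i < m, C.graph.Adj (v i) (v (i + 1))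

/-- The chain `v 0, …, v m` has the list `p` as its sequence of adjusted weights. -/
def ChainPattern (C : Config) (m : ℕ) (v : ℕ → C.V) (p : List ℤ) : Prop :=
  C.IsChain m v ∧ m + 1 = p.length ∧ ∀ i : Fin p.length, C.adjw (v i) = p.get i

/-- `Γ` contains a chain of consecutive vertices whose adjusted weights, read in order,
form the list `p`. -/
def HasPattern (C : Config) (p : List ℤ) : Prop := ∃ m v, C.ChainPattern m v p

/-- A chain realizing a bad-part pattern `p` (each entry of `p` is an adjusted weight
together with a flag marking the bad positions): the chain has the prescribed adjusted
weights, and the bad vertices of the configuration are exactly the vertices of the chain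
in the flagged positions. -/
def IsBadPartChain (C : Config) (p : List (ℤ × Bool)) (m : ℕ) (v : ℕ → C.V) : Prop :=
  C.IsChain m v ∧ m + 1 = p.length ∧
  (∀ i : Fin p.length, C.adjw (v i) = (p.get i).1) ∧
  (∀ x : C.V, C.IsBad x ↔ ∃ i : Fin p.length, (p.get i).2 = true ∧ v i = x)

end Config

/-- The chains of adjusted weights forbidden by Working Condition VI. -/
def forbiddenPatterns : List (List ℤ) :=
  [[1, 0, 0, 2], [1, 0, 0, 3], [1, 0, 0, 0, 3], [1, 1, 0, 0, 1, 2], [3, 1, 0, 0, 1],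
   [1, 0, 1, 2], [1, 0, 1, 3], [1, 1, 0, 2], [1, 1, 0, 1, 1, 2]]

/-- The bad-part patterns of Working Condition VII; `true` marks the bad positions. -/
def badPatterns : List (List (ℤ × Bool)) :=
  [[(1, false), (0, true), (1, false)],
   [(1, false), (0, true), (2, false)],
   [(1, false), (0, true), (3, false)],
   [(1, false), (1, true), (1, false)],
   [(1, false), (1, true), (2, false)],
   [(1, false), (2, true), (1, false)],
   [(1, false), (0, true), (1, false), (0, true), (1, false)],
   [(1, false), (0, true), (1, false), (0, true), (2, false)],
   [(1, false), (0, true), (1, false), (1, true), (1, false)],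
   [(1, false), (0, true), (1, false), (1, true), (2, false)],
   [(1, false), (1, true), (1, true), (1, false)],
   [(1, false), (1, true), (1, true), (1, true), (1, false)],
   [(1, false), (1, true), (2, true), (1, false)]]

namespace Config

/-- The Working Conditions (I)–(VII). -/
def WorkingConditions (C : Config) : Prop :=
  (∀ v : C.V, 2 ≤ C.w v) ∧
  (∀ v : C.V, C.adjw v ≤ 3) ∧
  (∀ u v : C.V, 1 < C.adjw u → 1 < C.adjw v → u = v) ∧
  (∀ v x : C.V, 1 < C.adjw v → C.IsBad x → C.adjw x = 1 → C.graph.Adj x v) ∧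
  ((∃ v : C.V, C.adjw v = 3) →
     ∀ u u' : C.V, C.graph.Adj u u' → C.adjw u = 1 → C.adjw u' = 1 → False) ∧
  (∀ u v x : C.V, C.graph.Adj u v → C.adjw u = 1 → C.adjw v = 1 →
     C.IsBad x → C.adjw x = 2 → C.graph.Adj x u ∨ C.graph.Adj x v) ∧
  (∀ p ∈ forbiddenPatterns, ¬ C.HasPattern p) ∧
  ((∃ x : C.V, C.IsBad x) → ∃ p ∈ badPatterns, ∃ m v, C.IsBadPartChain p m v)

end Config

/-- The standard inner product on `ℤ^N`. -/
def dot {N : ℕ} (x y : Fin N → ℤ) : ℤ := ∑ i, x i * y i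

/-- The support of a vector of `ℤ^N` with respect to the standard orthonormal basis. -/
def supp {N : ℕ} (x : Fin N → ℤ) : Finset (Fin N) :=
  Finset.univ.filter fun i => x i ≠ 0

namespace Config

/-- An embedding of a configuration into `ℤ^N`. -/
def IsEmbedding (C : Config) (N : ℕ) (φ : C.V → Fin N → ℤ) : Prop :=
  ∀ u v : C.V, dot (φ u) (φ v) =
    if u = v then C.w u else if C.graph.Adj u v then -1 else 0

/-- The restriction of `φ` to `S` is standard. -/
def IsStandardOn (C : Config) (N : ℕ) (φ : C.V → Fin N → ℤ) (S : Set C.V) : Prop :=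
  ∀ u ∈ S, ∀ v ∈ S,
    ((supp (φ u) ∩ supp (φ v)).card : ℤ) =
      if u = v then C.w v else if C.graph.Adj u v then 1 else 0

/-- A standard embedding. -/
def IsStandard (C : Config) (N : ℕ) (φ : C.V → Fin N → ℤ) : Prop :=
  C.IsStandardOn N φ Set.univ

/-- The restriction of `φ` to `S` is semi-standard at `x`. -/
def IsSemiStandardAtOn (C : Config) (N : ℕ) (φ : C.V → Fin N → ℤ) (x : C.V)
    (S : Set C.V) : Prop :=
  (∀ u ∈ S, ∀ v ∈ S,
    ((supp (φ u) ∩ supp (φ v)).card : ℤ) =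
      if u = v then C.w v
      else if C.graph.Adj u v then 1
      else if C.graph.Adj x u ∧ C.graph.Adj x v then 2
      else 0) ∧
  (∀ u ∈ S, ∀ v ∈ S, u ≠ v → C.graph.Adj x u → C.graph.Adj x v →
    (supp (φ u) ∩ supp (φ x) ∩ supp (φ v)).card = 1)

/-- A semi-standard embedding: semi-standard at some bad vertex. -/
def IsSemiStandard (C : Config) (N : ℕ) (φ : C.V → Fin N → ℤ) : Prop :=
  ∃ x : C.V, C.IsBad x ∧ C.IsSemiStandardAtOn N φ x Set.univ

/-- A candidate for the extended bad part: a chain containing the bad part whose two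
ends are either leaves or preceded by two consecutive vertices of vanishing adjusted
weight. -/
def IsEBPCand (C : Config) (m : ℕ) (v : ℕ → C.V) : Prop :=
  C.IsChain m v ∧
  (∀ p ∈ badPatterns, ∀ mb vb, C.IsBadPartChain p mb vb →
     ∀ i ≤ mb, ∃ j ≤ m, v j = vb i) ∧
  (C.IsLeaf (v 0) ∨ (2 ≤ m ∧ C.adjw (v 1) = 0 ∧ C.adjw (v 2) = 0)) ∧
  (C.IsLeaf (v m) ∨ (2 ≤ m ∧ C.adjw (v (m - 1)) = 0 ∧ C.adjw (v (m - 2)) = 0))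

/-- The extended bad part: a candidate with the fewest vertices. -/
def IsExtBadPart (C : Config) (m : ℕ) (v : ℕ → C.V) : Prop :=
  C.IsEBPCand m v ∧ ∀ m' v', C.IsEBPCand m' v' → m ≤ m'

/-- The set of vertices of the chain `v 0, …, v m`. -/
def ebpSet (C : Config) (m : ℕ) (v : ℕ → C.V) : Set C.V := {y | ∃ i ≤ m, v i = y}

/-- The outside part of `Γ` relative to the extended bad part `v 0, …, v m`. -/
def OutsidePart (C : Config) (m : ℕ) (v : ℕ → C.V) : Set C.V :=
  {x | ∀ i ≤ m, v i ≠ x}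
  ∪ {x | ¬ C.IsLeaf (v 0) ∧ (x = v 0 ∨ x = v 1 ∨ x = v 2)}
  ∪ {x | ¬ C.IsLeaf (v m) ∧ (x = v m ∨ x = v (m - 1) ∨ x = v (m - 2))}

/-- A screw at the front end of the extended bad part. -/
def IsFrontScrew (C : Config) (N : ℕ) (φ : C.V → Fin N → ℤ) (m : ℕ) (v : ℕ → C.V)
    (e : Fin N) : Prop :=
  ¬ C.IsLeaf (v 0) ∧ 3 ≤ m ∧ φ (v 2) e ≠ 0 ∧ φ (v 3) e ≠ 0

/-- A screw at the back end of the extended bad part. -/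
def IsBackScrew (C : Config) (N : ℕ) (φ : C.V → Fin N → ℤ) (m : ℕ) (v : ℕ → C.V)
    (e : Fin N) : Prop :=
  ¬ C.IsLeaf (v m) ∧ 3 ≤ m ∧ φ (v (m - 2)) e ≠ 0 ∧ φ (v (m - 3)) e ≠ 0

/-- All screws of `Γ` (with respect to `φ`) are clean. -/
def AllScrewsClean (C : Config) (N : ℕ) (φ : C.V → Fin N → ℤ) (m : ℕ)
    (v : ℕ → C.V) : Prop :=
  (∀ e : Fin N, C.IsFrontScrew N φ m v e →
    ∀ u : C.V, u ≠ v 2 → u ≠ v 3 → φ u e = 0) ∧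
  (∀ e : Fin N, C.IsBackScrew N φ m v e →
    ∀ u : C.V, u ≠ v (m - 2) → u ≠ v (m - 3) → φ u e = 0)

end Config

/-!
After changing signs of basis vectors, `φ x ≥ 0`. Let `u₁`, `u₂` be the neighbours of the bad
vertex `x`; semi-standardness gives a coordinate `e` common to all three supports. The vector
`φ u₁ + φ u₂ - φ x` has coefficient `-3` at `e` and coefficients of size at most one elsewhere, so
a vector of norm at most three orthogonal to all three vanishes at `e`. Doubling `φ u₁` and `φ u₂`
and adding the vectors of their outer neighbours replaces `3` by `5`, which covers the vertices of
larger norm.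

On the set `G` of the other coordinates of `φ x`, which has `w'(x) + 1 ≤ 3` elements, the
coordinates of a vertex outside the extended bad part therefore sum to zero, so they vanish when
`#G = 1`. When `#G` is two or three and they do not all vanish, the vertex is `e_i - e_j + r` with
`i, j ∈ G` and a tail `r` of norm at most one. Two roots of `A₁` or `A₂` are never orthogonal, so
the tails of two such orthogonal vertices agree up to sign. The Working Conditions then leave so
few possibilities that a combination `z₂ + 2z₁ + y + 3r` or `z₁ + z₂ + 2r` of the tail with nearby
vertices has norm zero; pairing it with the next vertex of the path gives a contradiction.
-/

open Finset
open scoped Matrix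

/-! ### Integer vectors of small norm -/

section Vectors

variable {ι : Type*} [Fintype ι]

theorem abs_apply_le_one_of_dotProduct_self_eq_card {z : ι → ℤ}
    (h : z ⬝ᵥ z = #{i | z i ≠ 0}) (k : ι) : |z k| ≤ 1 := by
  by_contra! hk
  have one_le_sq : ∀ i, z i ≠ 0 → 1 ≤ z i * z i := fun i hi => mul_self_pos.2 hi
  have hzk : z k ≠ 0 := by rintro h0; simp [h0] at hk
  have card_lt : ∑ i with z i ≠ 0, (1 : ℤ) < ∑ i with z i ≠ 0, z i * z i := by
    refine sum_lt_sum (fun i hi => one_le_sq i (mem_filter.1 hi).2) ⟨k, by simpa using hzk, ?_⟩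
    rw [← abs_mul_abs_self]
    nlinarith
  have sum_eq : ∑ i with z i ≠ 0, z i * z i = z ⬝ᵥ z :=
    sum_filter_of_ne fun i _ hi => left_ne_zero_of_mul hi
  rw [sum_eq, h] at card_lt
  simp at card_lt

theorem apply_eq_zero_of_dotProduct_eq_zero {z c : ι → ℤ} {e : ι} (hzc : z ⬝ᵥ c = 0)
    (hc : ∀ k ≠ e, |c k| ≤ 1) (hz : z ⬝ᵥ z ≤ |c e|) : z e = 0 := by
  classical
  have split (y : ι → ℤ) : z ⬝ᵥ y = z e * y e + ∑ k ∈ univ.erase e, z k * y k :=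
    (add_sum_erase _ _ (mem_univ e)).symm
  have term_le (k : ι) (hk : k ≠ e) : |z k * c k| ≤ z k * z k := by
    rw [abs_mul, ← abs_mul_abs_self (z k)]
    have := hc k hk
    have := abs_nonneg (z k)
    have : |c k| ≤ |z k| ∨ |z k| = 0 := by omega
    rcases this with h | h
    · gcongr
    · simp [h]
  have abs_le : |z e * c e| ≤ ∑ k ∈ univ.erase e, z k * z k := by
    rw [eq_neg_of_add_eq_zero_left ((split c).symm.trans hzc), abs_neg]
    exact (abs_sum_le_sum_abs _ _).trans (sum_le_sum fun k hk => term_le k (ne_of_mem_erase hk))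
  by_contra hne
  rw [split, abs_mul] at *
  nlinarith [Int.one_le_abs hne, mul_self_pos.2 hne, abs_nonneg (c e)]

theorem two_le_dotProduct_self_of_sum_eq_zero {z : ι → ℤ} {G : Finset ι}
    (hsum : ∑ k ∈ G, z k = 0) (hne : ∃ k ∈ G, z k ≠ 0) : 2 ≤ z ⬝ᵥ z := by
  classical
  obtain ⟨i, -, hi⟩ := exists_pos_of_sum_zero_of_exists_nonzero z hsum hne
  obtain ⟨j, -, hj⟩ := exists_pos_of_sum_zero_of_exists_nonzero (-z) (by simpa using hsum)
    (by simpa using hne)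
  rw [Pi.neg_apply, Left.neg_pos_iff] at hj
  have hij : i ≠ j := by rintro rfl; omega
  calc (2 : ℤ) ≤ z i * z i + z j * z j := by nlinarith
    _ = ∑ k ∈ {i, j}, z k * z k := by rw [sum_pair hij]
    _ ≤ z ⬝ᵥ z := sum_le_univ_sum_of_nonneg fun k => mul_self_nonneg _

theorem eq_or_eq_neg_of_dotProduct_ne_zero {r s : ι → ℤ} (hr : r ⬝ᵥ r ≤ 1) (hs : s ⬝ᵥ s ≤ 1)
    (hrs : r ⬝ᵥ s ≠ 0) : s = r ∨ s = -r := by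
  have hsub : (s - r) ⬝ᵥ (s - r) = s ⬝ᵥ s - 2 * r ⬝ᵥ s + r ⬝ᵥ r := by
    simp only [sub_dotProduct, dotProduct_sub, dotProduct_comm s r]; ring
  have hadd : (s + r) ⬝ᵥ (s + r) = s ⬝ᵥ s + 2 * r ⬝ᵥ s + r ⬝ᵥ r := by
    simp only [add_dotProduct, dotProduct_add, dotProduct_comm s r]; ring
  have sub_nonneg : 0 ≤ (s - r) ⬝ᵥ (s - r) := dotProduct_self_star_nonneg _
  have add_nonneg : 0 ≤ (s + r) ⬝ᵥ (s + r) := dotProduct_self_star_nonneg _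
  rcases lt_or_gt_of_ne hrs with h | h
  · exact .inr (eq_neg_of_add_eq_zero_left (dotProduct_self_eq_zero.1 (by omega)))
  · exact .inl (sub_eq_zero.1 (dotProduct_self_eq_zero.1 (by omega)))

theorem add_add_two_smul_eq_zero {r z₁ z₂ : ι → ℤ} (hr : r ⬝ᵥ r = 1)
    (hrz₁ : r ⬝ᵥ z₁ = -1) (hrz₂ : r ⬝ᵥ z₂ = -1) (hz₁ : z₁ ⬝ᵥ z₁ = 2) (hz₂ : z₂ ⬝ᵥ z₂ = 2)
    (hz₁₂ : z₁ ⬝ᵥ z₂ = 0) : z₁ + z₂ + (2 : ℤ) • r = 0 := by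
  rw [← dotProduct_self_eq_zero]
  simp only [add_dotProduct, dotProduct_add, smul_dotProduct, dotProduct_smul, smul_eq_mul,
    dotProduct_comm z₁ r, dotProduct_comm z₂ r, dotProduct_comm z₂ z₁, *]
  norm_num

theorem add_two_smul_add_add_three_smul_eq_zero {r z₁ z₂ y : ι → ℤ} (hr : r ⬝ᵥ r = 1)
    (hrz₁ : r ⬝ᵥ z₁ = -1) (hrz₂ : r ⬝ᵥ z₂ = -1) (hry : r ⬝ᵥ y = 0) (hz₁ : z₁ ⬝ᵥ z₁ = 2)
    (hy : y ⬝ᵥ y = 2) (hz₂ : z₂ ⬝ᵥ z₂ ≤ 3) (hz₁₂ : z₁ ⬝ᵥ z₂ = 0) (hyz₁ : y ⬝ᵥ z₁ = -1)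
    (hyz₂ : y ⬝ᵥ z₂ = 0) : z₂ ⬝ᵥ z₂ = 3 ∧ z₂ + (2 : ℤ) • z₁ + y + (3 : ℤ) • r = 0 := by
  set n := z₂ + (2 : ℤ) • z₁ + y + (3 : ℤ) • r with hn
  have norm_eq : n ⬝ᵥ n = z₂ ⬝ᵥ z₂ - 3 := by
    simp only [hn, add_dotProduct, dotProduct_add, smul_dotProduct, dotProduct_smul, smul_eq_mul,
      dotProduct_comm z₁ r, dotProduct_comm z₂ r, dotProduct_comm y r, dotProduct_comm z₂ z₁,
      dotProduct_comm z₁ y, dotProduct_comm z₂ y, hr, hrz₁, hrz₂, hry, hz₁, hy, hz₁₂, hyz₁, hyz₂]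
    ring
  have norm_nonneg : 0 ≤ n ⬝ᵥ n := dotProduct_self_star_nonneg _
  have hz₂' : z₂ ⬝ᵥ z₂ = 3 := by omega
  exact ⟨hz₂', dotProduct_self_eq_zero.1 (by omega)⟩

end Vectors

section RootWithTail

variable {ι : Type*} [DecidableEq ι]

/-- `z = e_i - e_j + r` with distinct `i, j ∈ G` and a tail `r` that vanishes on `G`.  This is the
shape of every vector of norm at most three whose coordinates on `G` sum to zero without all
being zero. -/
def IsRootWithTail (G : Finset ι) (z r : ι → ℤ) : Prop :=
  ∃ i ∈ G, ∃ j ∈ G, i ≠ j ∧ (∀ k ∈ G, r k = 0) ∧ z = Pi.single i 1 - Pi.single j 1 + r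

variable [Fintype ι] {G : Finset ι} {z z' r r' : ι → ℤ}

theorem exists_isRootWithTail (hsum : ∑ k ∈ G, z k = 0) (hne : ∃ k ∈ G, z k ≠ 0)
    (hz : z ⬝ᵥ z ≤ 3) : ∃ r, IsRootWithTail G z r := by
  obtain ⟨i, hiG, hi⟩ := exists_pos_of_sum_zero_of_exists_nonzero z hsum hne
  obtain ⟨j, hjG, hj⟩ := exists_pos_of_sum_zero_of_exists_nonzero (-z) (by simpa using hsum)
    (by simpa using hne)
  rw [Pi.neg_apply, Left.neg_pos_iff] at hj
  have hij : i ≠ j := by rintro rfl; omega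
  set r := z - (Pi.single i 1 - Pi.single j 1) with hr
  have norm_eq : r ⬝ᵥ r = z ⬝ᵥ z - 2 * z i + 2 * z j + 2 := by
    simp only [hr, sub_dotProduct, dotProduct_sub, dotProduct_single, single_dotProduct,
      Pi.sub_apply, Pi.single_eq_same, Pi.single_eq_of_ne hij, Pi.single_eq_of_ne hij.symm]
    ring
  have sum_tail : ∑ k ∈ G, r k = 0 := by
    simp [hr, sum_sub_distrib, hsum, hiG, hjG]
  refine ⟨r, i, hiG, j, hjG, hij, ?_, by rw [hr]; abel⟩
  by_contra! tail_ne
  have := two_le_dotProduct_self_of_sum_eq_zero sum_tail tail_ne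
  omega

namespace IsRootWithTail

theorem dotProduct_eq_of_forall_eq_zero (h : IsRootWithTail G z r) {y : ι → ℤ}
    (hy : ∀ k ∈ G, y k = 0) : z ⬝ᵥ y = r ⬝ᵥ y := by
  obtain ⟨i, hi, j, hj, -, -, rfl⟩ := h
  simp [add_dotProduct, sub_dotProduct, hy i hi, hy j hj]

theorem dotProduct_self (h : IsRootWithTail G z r) : z ⬝ᵥ z = 2 + r ⬝ᵥ r := by
  obtain ⟨i, hi, j, hj, hij, hr, rfl⟩ := h
  simp [add_dotProduct, sub_dotProduct, dotProduct_add, dotProduct_sub, hr i hi, hr j hj, hij,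
    hij.symm]

theorem exists_dotProduct_eq (h : IsRootWithTail G z r) (h' : IsRootWithTail G z' r') :
    ∃ i ∈ G, ∃ j ∈ G, ∃ a ∈ G, ∃ b ∈ G, i ≠ j ∧ a ≠ b ∧ z ⬝ᵥ z' =
      ((if a = i then 1 else 0) - (if a = j then 1 else 0)) -
        ((if b = i then 1 else 0) - (if b = j then 1 else 0)) + r ⬝ᵥ r' := by
  obtain ⟨i, hi, j, hj, hij, hr, rfl⟩ := h
  obtain ⟨a, ha, b, hb, hab, hr', rfl⟩ := h'
  refine ⟨i, hi, j, hj, a, ha, b, hb, hij, hab, ?_⟩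
  simp [add_dotProduct, sub_dotProduct, dotProduct_add, dotProduct_sub, hr a ha, hr b hb,
    hr' i hi, hr' j hj, Pi.single_apply]

theorem dotProduct_eq_of_card_le_two (hG : #G ≤ 2) (h : IsRootWithTail G z r)
    (h' : IsRootWithTail G z' r') :
    z ⬝ᵥ z' = 2 + r ⬝ᵥ r' ∨ z ⬝ᵥ z' = -2 + r ⬝ᵥ r' := by
  obtain ⟨i, hi, j, hj, a, ha, b, hb, hij, hab, hdot⟩ := h.exists_dotProduct_eq h'
  have not_three := mt two_lt_card.2 hG.not_gt
  push Not at not_three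
  have := not_three i hi j hj a ha
  have := not_three i hi j hj b hb
  grind

/-- Two roots of `A₂` are never orthogonal. -/
theorem dotProduct_tails_ne_zero (hG : #G ≤ 3) (h : IsRootWithTail G z r)
    (h' : IsRootWithTail G z' r') (hzz' : z ⬝ᵥ z' = 0) : r ⬝ᵥ r' ≠ 0 := by
  obtain ⟨i, hi, j, hj, a, ha, b, hb, hij, hab, hdot⟩ := h.exists_dotProduct_eq h'
  have not_four := mt three_lt_card.2 hG.not_gt
  push Not at not_four
  have := not_four i hi j hj a ha b hb
  grind

end IsRootWithTail

end RootWithTail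

section Tripod

variable {ι : Type*}

/-- Three legs `a`, `b₁`, `b₂` meeting at the coordinate `e`, where `b₁` and `b₂` cancel at `f` and
the legs are otherwise disjointly supported with small coefficients.  A bad vertex and two of its
neighbours are embedded in this shape with `c = 1`; larger `c` arise from combinations of the
neighbours with vertices further out. -/
structure IsTripod (c : ℤ) (a b₁ b₂ : ι → ℤ) (e f : ι) : Prop where
  apply_center : a e = 1
  apply_center₁ : b₁ e = -c
  apply_center₂ : b₂ e = -c
  add_eq_zero : b₁ f + b₂ f = 0
  abs_le_one (k : ι) : |a k| ≤ 1
  abs_le_one₁ {k : ι} : k ≠ e → k ≠ f → |b₁ k| ≤ 1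
  abs_le_one₂ {k : ι} : k ≠ e → k ≠ f → |b₂ k| ≤ 1
  disjoint₁ {k : ι} : k ≠ e → a k = 0 ∨ b₁ k = 0
  disjoint₂ {k : ι} : k ≠ e → a k = 0 ∨ b₂ k = 0
  disjoint {k : ι} : k ≠ e → k ≠ f → b₁ k = 0 ∨ b₂ k = 0

theorem IsTripod.apply_center_eq_zero [Fintype ι] {c : ℤ} {a b₁ b₂ : ι → ℤ} {e f : ι}
    (h : IsTripod c a b₁ b₂ e f) {z : ι → ℤ} (ha : z ⬝ᵥ a = 0) (hb₁ : z ⬝ᵥ b₁ = 0)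
    (hb₂ : z ⬝ᵥ b₂ = 0) (hz : z ⬝ᵥ z ≤ 2 * c + 1) : z e = 0 := by
  refine apply_eq_zero_of_dotProduct_eq_zero (c := b₁ + b₂ - a) ?_ (fun k hke => ?_) ?_
  · simp only [dotProduct_sub, dotProduct_add, ha, hb₁, hb₂, add_zero, sub_zero]
  · rw [Pi.sub_apply, Pi.add_apply]
    by_cases hkf : k = f
    · rw [hkf, h.add_eq_zero, zero_sub, abs_neg]
      exact h.abs_le_one f
    · have := h.abs_le_one k
      have := h.abs_le_one₁ hke hkf
      have := h.abs_le_one₂ hke hkf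
      rcases h.disjoint₁ hke with h₁ | h₁ <;> rcases h.disjoint₂ hke with h₂ | h₂ <;>
        rcases h.disjoint hke hkf with h₃ | h₃ <;> simp [*]
  · rw [Pi.sub_apply, Pi.add_apply, h.apply_center, h.apply_center₁, h.apply_center₂]
    exact le_abs.2 (.inr (by linarith))

theorem IsTripod.double {a u₁ u₂ y₁ y₂ : ι → ℤ} {e f : ι} (h : IsTripod 1 a u₁ u₂ e f)
    (hu₁ : u₁ f ≠ 0) (hu₂ : u₂ f ≠ 0) (hay₁ : ∀ k, a k = 0 ∨ y₁ k = 0)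
    (hay₂ : ∀ k, a k = 0 ∨ y₂ k = 0) (huy₁ : ∀ k, u₂ k = 0 ∨ y₁ k = 0)
    (huy₂ : ∀ k, u₁ k = 0 ∨ y₂ k = 0) (hyy : ∀ k, y₁ k = 0 ∨ y₂ k = 0)
    (hle₁ : ∀ k, k ≠ e → k ≠ f → |2 * u₁ k + y₁ k| ≤ 1)
    (hle₂ : ∀ k, k ≠ e → k ≠ f → |2 * u₂ k + y₂ k| ≤ 1) :
    IsTripod 2 a ((2 : ℤ) • u₁ + y₁) ((2 : ℤ) • u₂ + y₂) e f where
  apply_center := h.apply_center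
  apply_center₁ := by
    have := h.apply_center₁
    have := (hay₁ e).resolve_left (by simp [h.apply_center])
    simp [*]
  apply_center₂ := by
    have := h.apply_center₂
    have := (hay₂ e).resolve_left (by simp [h.apply_center])
    simp [*]
  add_eq_zero := by
    have := h.add_eq_zero
    simp only [Pi.add_apply, Pi.smul_apply, smul_eq_mul, (huy₁ f).resolve_left hu₂,
      (huy₂ f).resolve_left hu₁]
    omega
  abs_le_one := h.abs_le_one
  abs_le_one₁ := hle₁ _
  abs_le_one₂ := hle₂ _
  disjoint₁ {k} hke := by
    rcases h.disjoint₁ hke with h₁ | h₁ <;> rcases hay₁ k with h₂ | h₂ <;> simp [*]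
  disjoint₂ {k} hke := by
    rcases h.disjoint₂ hke with h₁ | h₁ <;> rcases hay₂ k with h₂ | h₂ <;> simp [*]
  disjoint {k} hke hkf := by
    have := h.disjoint hke hkf
    have := huy₁ k
    have := huy₂ k
    have := hyy k
    simp only [Pi.add_apply, Pi.smul_apply, smul_eq_mul]
    omega

end Tripod

/-! ### Linear configurations and the extended bad part -/

theorem ne_and_not_adj_of_two_le_length {V : Type*} {G : SimpleGraph V} (hG : G.IsAcyclic)
    {a b : V} {p : G.Walk a b} (hp : p.edges.IsChain (· ≠ ·)) (hlen : 2 ≤ p.length) :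
    a ≠ b ∧ ¬ G.Adj a b := by
  have hpath := (hG.isPath_iff_isChain p).2 hp
  have length_eq (q : G.Path a b) : p.length = q.1.length :=
    congrArg (fun q : G.Path a b => q.1.length) (hG.subsingleton_path a b |>.elim ⟨p, hpath⟩ q)
  refine ⟨fun hab => ?_, fun hab => ?_⟩
  · subst hab
    have : p.length = 0 := length_eq .nil
    omega
  · have : p.length = 1 := length_eq (.singleton hab)
    omega

namespace Config

variable {C : Config}

section Linear

variable {a b c d e s : C.V}

theorem IsLinear.eq_or_eq_of_adj (h : C.IsLinear) (hab : a ≠ b) (ha : C.graph.Adj s a)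
    (hb : C.graph.Adj s b) (hc : C.graph.Adj s c) : c = a ∨ c = b := by
  by_contra! hne
  have hsub : ({a, b, c} : Set C.V) ⊆ C.graph.neighborSet s := by
    rintro y (rfl | rfl | rfl) <;> assumption
  have three_le := Set.ncard_le_ncard hsub
  rw [Set.ncard_eq_three.2 ⟨a, b, c, hab, hne.1.symm, hne.2.symm, rfl⟩] at three_le
  exact absurd (h.1 s) (by rw [deg]; omega)

theorem IsLinear.deg_eq_two (h : C.IsLinear) (hab : a ≠ b) (ha : C.graph.Adj s a)
    (hb : C.graph.Adj s b) : C.deg s = 2 :=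
  (h.1 s).antisymm <| (Set.one_lt_ncard (Set.toFinite _)).2 ⟨a, ha, b, hb, hab⟩

theorem deg_pos (ha : C.graph.Adj s a) : 0 < C.deg s :=
  (Set.ncard_pos (Set.toFinite _)).2 ⟨a, ha⟩

theorem exists_adj (hs : 0 < C.deg s) : ∃ a, C.graph.Adj s a :=
  (Set.ncard_pos (Set.toFinite _)).1 hs

theorem exists_adj_ne (hs : C.deg s = 2) (a : C.V) : ∃ b, C.graph.Adj s b ∧ b ≠ a :=
  Set.exists_ne_of_one_lt_ncard (by change 1 < C.deg s; omega) a

theorem IsLinear.adjw_nonneg (h : C.IsLinear) (hs : 2 ≤ C.w s) : 0 ≤ C.adjw s := by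
  have := h.1 s
  rw [adjw]
  omega

theorem IsLinear.w_eq_two_and_deg_eq_two (h : C.IsLinear) (hw : 2 ≤ C.w s) (hs : C.adjw s = 0) :
    C.w s = 2 ∧ C.deg s = 2 := by
  have := h.1 s
  rw [adjw] at hs
  omega

theorem IsLinear.w_le (h : C.IsLinear) (s : C.V) : C.w s ≤ C.adjw s + 2 := by
  have := h.1 s
  rw [adjw]
  omega

theorem IsLinear.separated_of_two_steps (h : C.IsLinear) (hab : C.graph.Adj a b)
    (hbc : C.graph.Adj b c) (hac : a ≠ c) : a ≠ c ∧ ¬ C.graph.Adj a c :=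
  ne_and_not_adj_of_two_le_length h.2 (p := .cons hab (.cons hbc .nil))
    (by simp [hac, hab.ne]) (by simp)

theorem IsLinear.separated_of_three_steps (h : C.IsLinear) (hab : C.graph.Adj a b)
    (hbc : C.graph.Adj b c) (hcd : C.graph.Adj c d) (hac : a ≠ c) (hbd : b ≠ d) :
    a ≠ d ∧ ¬ C.graph.Adj a d :=
  ne_and_not_adj_of_two_le_length h.2 (p := .cons hab (.cons hbc (.cons hcd .nil)))
    (by simp [hac, hbd, hab.ne, hbc.ne]) (by simp)

theorem IsLinear.separated_of_four_steps (h : C.IsLinear) (hab : C.graph.Adj a b)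
    (hbc : C.graph.Adj b c) (hcd : C.graph.Adj c d) (hde : C.graph.Adj d e) (hac : a ≠ c)
    (hbd : b ≠ d) (hce : c ≠ e) : a ≠ e ∧ ¬ C.graph.Adj a e :=
  ne_and_not_adj_of_two_le_length h.2 (p := .cons hab (.cons hbc (.cons hcd (.cons hde .nil))))
    (by simp [hac, hbd, hce, hab.ne, hbc.ne, hcd.ne]) (by simp)

end Linear

namespace IsEmbedding

variable {N : ℕ} {φ : C.V → Fin N → ℤ} {a b c d e : C.V}

theorem dotProduct_self (hφ : C.IsEmbedding N φ) (a : C.V) : φ a ⬝ᵥ φ a = C.w a :=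
  (hφ a a).trans (if_pos rfl)

theorem dotProduct_of_adj (hφ : C.IsEmbedding N φ) (hab : C.graph.Adj a b) :
    φ a ⬝ᵥ φ b = -1 :=
  (hφ a b).trans (by rw [if_neg hab.ne, if_pos hab])

theorem dotProduct_of_separated (hφ : C.IsEmbedding N φ) (hab : a ≠ b ∧ ¬ C.graph.Adj a b) :
    φ a ⬝ᵥ φ b = 0 :=
  (hφ a b).trans (by rw [if_neg hab.1, if_neg hab.2])

end IsEmbedding


/-- The part of the Working Conditions that matters near a bad vertex: (I), (II), (III), (V), and
the bound on the adjusted weight of a bad vertex that the patterns of (VII) impose. -/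
structure LocalConditions (C : Config) : Prop where
  two_le_w (v : C.V) : 2 ≤ C.w v
  adjw_le_three (v : C.V) : C.adjw v ≤ 3
  eq_of_one_lt_adjw {u v : C.V} : 1 < C.adjw u → 1 < C.adjw v → u = v
  adj_of_one_lt_adjw {x v : C.V} : C.IsBad x → C.adjw x = 1 → 1 < C.adjw v → C.graph.Adj x v
  adj_or_adj_of_adjw_eq_one {x u v : C.V} : C.IsBad x → C.adjw x = 2 → C.graph.Adj u v →
    C.adjw u = 1 → C.adjw v = 1 → C.graph.Adj x u ∨ C.graph.Adj x v
  adjw_le_two_of_isBad {x : C.V} : C.IsBad x → C.adjw x ≤ 2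

/-- A set of vertices containing all bad vertices and their neighbours, such that whenever an edge
leaves it at `s`, the next two vertices on the other side of `s` have adjusted weight zero (as far
as they exist).  The extended bad part is such a set. -/
structure IsBadRegion (C : Config) (S : Set C.V) : Prop where
  mem_of_isBad {x : C.V} : C.IsBad x → x ∈ S
  mem_of_isBad_of_adj {x u : C.V} : C.IsBad x → C.graph.Adj x u → u ∈ S
  adjw_eq_zero_of_exit {s y z : C.V} : s ∈ S → z ∉ S → C.graph.Adj s z → y ∈ S →
    C.graph.Adj s y → C.adjw y = 0 ∧ ∀ t, C.graph.Adj y t → t ≠ s → C.adjw t = 0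

theorem pos_and_lt_and_le_two_of_flagged : ∀ p ∈ badPatterns, ∀ i : Fin p.length,
    (p.get i).2 = true → 0 < (i : ℕ) ∧ (i : ℕ) + 1 < p.length ∧ (p.get i).1 ≤ 2 := by
  decide

theorem WorkingConditions.localConditions (h : C.WorkingConditions) : C.LocalConditions where
  two_le_w := h.1
  adjw_le_three := h.2.1
  eq_of_one_lt_adjw := h.2.2.1 _ _
  adj_of_one_lt_adjw hx hx1 hv := h.2.2.2.1 _ _ hv hx hx1
  adj_or_adj_of_adjw_eq_one hx hx2 huv hu hv := h.2.2.2.2.2.1 _ _ _ huv hu hv hx hx2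
  adjw_le_two_of_isBad {x} hx := by
    obtain ⟨p, hp, m, v, -, -, hadjw, hflag⟩ := h.2.2.2.2.2.2.2 ⟨x, hx⟩
    obtain ⟨i, hi, rfl⟩ := (hflag x).1 hx
    rw [hadjw]
    exact (pos_and_lt_and_le_two_of_flagged p hp i hi).2.2

namespace IsChain

variable {m : ℕ} {v : ℕ → C.V}

theorem eq_or_eq_of_adj (hv : C.IsChain m v) (hlin : C.IsLinear) {i : ℕ} (hi : i + 1 < m) {z : C.V}
    (hz : C.graph.Adj (v (i + 1)) z) : z = v i ∨ z = v (i + 2) :=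
  hlin.eq_or_eq_of_adj (fun h => by have := hv.1 i (by omega) (i + 2) hi h; omega)
    (hv.2 i (by omega)).symm (hv.2 (i + 1) hi) hz

theorem reverse (hv : C.IsChain m v) : C.IsChain m fun i => v (m - i) := by
  refine ⟨fun i hi j hj hij => ?_, fun i hi => ?_⟩
  · have := hv.1 _ (m.sub_le i) _ (m.sub_le j) hij
    omega
  · have := hv.2 (m - (i + 1)) (by omega)
    rw [show m - (i + 1) + 1 = m - i by omega] at this
    exact this.symm

theorem adjw_eq_zero_of_exit_front (hv : C.IsChain m v) (hlin : C.IsLinear)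
    (hend : C.IsLeaf (v 0) ∨ (2 ≤ m ∧ C.adjw (v 1) = 0 ∧ C.adjw (v 2) = 0)) {y z : C.V}
    (hz : z ∉ C.ebpSet m v) (hvz : C.graph.Adj (v 0) z) (hy : y ∈ C.ebpSet m v)
    (hvy : C.graph.Adj (v 0) y) :
    C.adjw y = 0 ∧ ∀ t, C.graph.Adj y t → t ≠ v 0 → C.adjw t = 0 := by
  have hyz : y ≠ z := fun h => hz (h ▸ hy)
  have not_leaf : ¬ C.IsLeaf (v 0) := by
    rw [IsLeaf, hlin.deg_eq_two hyz hvy hvz]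
    norm_num
  obtain ⟨hm, h₁, h₂⟩ := hend.resolve_left not_leaf
  have z_ne : z ≠ v 1 := fun h => hz ⟨1, by omega, h.symm⟩
  obtain rfl : y = v 1 :=
    (hlin.eq_or_eq_of_adj z_ne.symm (hv.2 0 (by omega)) hvz hvy).resolve_right hyz
  refine ⟨h₁, fun t ht ht0 => ?_⟩
  rwa [(hv.eq_or_eq_of_adj hlin (i := 0) hm ht).resolve_left ht0]

end IsChain

theorem ebpSet_reverse (m : ℕ) (v : ℕ → C.V) :
    C.ebpSet m (fun i => v (m - i)) = C.ebpSet m v := by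
  ext y
  refine ⟨fun ⟨i, _, h⟩ => ⟨m - i, m.sub_le i, h⟩, fun ⟨i, hi, h⟩ => ⟨m - i, m.sub_le i, ?_⟩⟩
  simpa only [Nat.sub_sub_self hi] using h

namespace IsEBPCand

variable {m : ℕ} {v : ℕ → C.V}

theorem adjw_eq_zero_of_exit (h : C.IsEBPCand m v) (hlin : C.IsLinear) {s y z : C.V}
    (hs : s ∈ C.ebpSet m v) (hz : z ∉ C.ebpSet m v) (hsz : C.graph.Adj s z)
    (hy : y ∈ C.ebpSet m v) (hsy : C.graph.Adj s y) :
    C.adjw y = 0 ∧ ∀ t, C.graph.Adj y t → t ≠ s → C.adjw t = 0 := by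
  obtain ⟨hv, -, hfront, hback⟩ := h
  obtain ⟨i, hi, rfl⟩ := hs
  obtain rfl | rfl | ⟨j, rfl, hj⟩ : i = 0 ∨ i = m ∨ ∃ j, i = j + 1 ∧ j + 1 < m := by
    rcases i with _ | j
    · exact .inl rfl
    · exact .inr (hi.eq_or_lt.imp_right fun hj => ⟨j, rfl, hj⟩)
  · exact hv.adjw_eq_zero_of_exit_front hlin hfront hz hsz hy hsy
  · rw [← ebpSet_reverse] at hy hz
    exact hv.reverse.adjw_eq_zero_of_exit_front hlin hback hz hsz hy hsy
  · rcases hv.eq_or_eq_of_adj hlin hj hsz with rfl | rfl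
    · exact absurd ⟨j, by omega, rfl⟩ hz
    · exact absurd ⟨j + 2, by omega, rfl⟩ hz

theorem isBadRegion (h : C.IsEBPCand m v) (hlin : C.IsLinear) (hwc : C.WorkingConditions) :
    C.IsBadRegion (C.ebpSet m v) where
  mem_of_isBad {x} hx := by
    obtain ⟨p, hp, n, b, hb⟩ := hwc.2.2.2.2.2.2.2 ⟨x, hx⟩
    obtain ⟨i, -, rfl⟩ := (hb.2.2.2 x).1 hx
    exact h.2.1 p hp n b hb i (by have := hb.2.1; omega)
  mem_of_isBad_of_adj {x u} hx hxu := by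
    obtain ⟨p, hp, n, b, hb⟩ := hwc.2.2.2.2.2.2.2 ⟨x, hx⟩
    obtain ⟨⟨i, hilt⟩, hi, rfl⟩ := (hb.2.2.2 x).1 hx
    obtain ⟨hpos, hlt, -⟩ := pos_and_lt_and_le_two_of_flagged p hp _ hi
    obtain ⟨j, rfl⟩ : ∃ j, i = j + 1 := Nat.exists_eq_add_one.2 hpos
    have hlen := hb.2.1
    rcases hb.1.eq_or_eq_of_adj hlin (by simp only at hlt; omega) hxu with rfl | rfl
    · exact h.2.1 p hp n b hb j (by omega)
    · exact h.2.1 p hp n b hb (j + 2) (by simp only at hlt; omega)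
  adjw_eq_zero_of_exit := h.adjw_eq_zero_of_exit hlin

end IsEBPCand

namespace IsBad

variable {x u : C.V}

theorem exists_adj_ne_of_adj (hx : C.IsBad x) (hlin : C.IsLinear) (hu : C.graph.Adj x u) :
    0 < C.adjw u ∧ ∃ u', u' ≠ u ∧ C.graph.Adj x u' ∧ 0 < C.adjw u' := by
  obtain ⟨a, b, hab, ha, hb, hwa, hwb⟩ := hx
  rcases hlin.eq_or_eq_of_adj hab ha hb hu with rfl | rfl
  · exact ⟨hwa, b, hab.symm, hb, hwb⟩
  · exact ⟨hwb, a, hab, ha, hwa⟩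

theorem deg_eq_two (hx : C.IsBad x) (hlin : C.IsLinear) : C.deg x = 2 :=
  let ⟨_, _, hab, ha, hb, _⟩ := hx
  hlin.deg_eq_two hab ha hb

end IsBad

namespace IsBadRegion

variable {S : Set C.V} {x u y z : C.V}

theorem mem_of_two_steps (hS : C.IsBadRegion S) (hlin : C.IsLinear) (hx : C.IsBad x)
    (hxu : C.graph.Adj x u) (huy : C.graph.Adj u y) : y ∈ S := by
  by_contra hy
  obtain ⟨-, u', hu'u, hxu', hpos⟩ := hx.exists_adj_ne_of_adj hlin hxu
  have := (hS.adjw_eq_zero_of_exit (hS.mem_of_isBad_of_adj hx hxu) hy huy (hS.mem_of_isBad hx)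
    hxu.symm).2 u' hxu' hu'u
  omega

theorem mem_of_three_steps (hS : C.IsBadRegion S) (hlin : C.IsLinear) (hx : C.IsBad x)
    (hxu : C.graph.Adj x u) (huy : C.graph.Adj u y) (hyz : C.graph.Adj y z) : z ∈ S := by
  by_contra hz
  have hpos := (hx.exists_adj_ne_of_adj hlin hxu).1
  have := (hS.adjw_eq_zero_of_exit (hS.mem_of_two_steps hlin hx hxu huy) hz hyz
    (hS.mem_of_isBad_of_adj hx hxu) huy.symm).1
  omega

end IsBadRegion

end Config

/-! ### Semi-standard embeddings -/

section Support

variable {N : ℕ} {a b : Fin N → ℤ}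

theorem mem_supp {k : Fin N} : k ∈ supp a ↔ a k ≠ 0 := by
  simp [supp]

theorem dotProduct_eq_sum_of_supp_inter_subset {T : Finset (Fin N)} (h : supp a ∩ supp b ⊆ T) :
    a ⬝ᵥ b = ∑ k ∈ T, a k * b k := by
  refine (sum_subset (subset_univ T) fun k _ hk => ?_).symm
  by_contra hab
  exact hk (h (mem_inter.2 ⟨mem_supp.2 (left_ne_zero_of_mul hab),
    mem_supp.2 (right_ne_zero_of_mul hab)⟩))

theorem sum_supp_eq_dotProduct (ha : ∀ k ∈ supp a, a k = 1) : ∑ k ∈ supp a, b k = a ⬝ᵥ b := by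
  rw [dotProduct_eq_sum_of_supp_inter_subset inter_subset_left]
  exact sum_congr rfl fun k hk => by rw [ha k hk, one_mul]

end Support

namespace Config

variable {C : Config} {N : ℕ} {φ : C.V → Fin N → ℤ}

theorem IsEmbedding.exists_nonneg (hφ : C.IsEmbedding N φ) (x : C.V) :
    ∃ ψ, C.IsEmbedding N ψ ∧ (∀ y, supp (ψ y) = supp (φ y)) ∧ ∀ k, 0 ≤ ψ x k := by
  set σ : Fin N → ℤ := fun k => if φ x k < 0 then -1 else 1
  have sq_eq_one (k : Fin N) : σ k * σ k = 1 := by grind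
  refine ⟨fun y => σ * φ y, fun u v => ?_, fun y => ?_, fun k => ?_⟩
  · rw [← hφ u v]
    refine sum_congr rfl fun k _ => ?_
    simp only [Pi.mul_apply]
    linear_combination φ u k * φ v k * sq_eq_one k
  · ext k
    simp only [mem_supp, Pi.mul_apply, ne_eq, mul_eq_zero,
      left_ne_zero_of_mul (ne_of_eq_of_ne (sq_eq_one k) one_ne_zero), false_or]
  · change 0 ≤ σ k * φ x k
    grind

namespace IsSemiStandardAtOn

variable {x : C.V} {S : Set C.V} {s t u u₁ u₂ y : C.V} {e f : Fin N}

theorem of_supp_eq {ψ : C.V → Fin N → ℤ} (h : C.IsSemiStandardAtOn N φ x S)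
    (hψ : ∀ y, supp (ψ y) = supp (φ y)) : C.IsSemiStandardAtOn N ψ x S := by
  simpa only [IsSemiStandardAtOn, hψ] using h

theorem card_supp (h : C.IsSemiStandardAtOn N φ x S) (hs : s ∈ S) :
    (#(supp (φ s)) : ℤ) = C.w s := by
  simpa using h.1 s hs s hs

theorem card_supp_inter_of_adj (h : C.IsSemiStandardAtOn N φ x S) (hs : s ∈ S) (ht : t ∈ S)
    (hst : C.graph.Adj s t) : #(supp (φ s) ∩ supp (φ t)) = 1 := by
  have := h.1 s hs t ht
  rw [if_neg hst.ne, if_pos hst] at this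
  exact_mod_cast this

theorem abs_le_one (h : C.IsSemiStandardAtOn N φ x S) (hφ : C.IsEmbedding N φ) (hs : s ∈ S)
    (k : Fin N) : |φ s k| ≤ 1 :=
  abs_apply_le_one_of_dotProduct_self_eq_card
    ((hφ.dotProduct_self s).trans (h.card_supp hs).symm) k

theorem eq_zero_or_eq_zero (h : C.IsSemiStandardAtOn N φ x S) (hs : s ∈ S) (ht : t ∈ S)
    (hst : s ≠ t ∧ ¬ C.graph.Adj s t) (hx : ¬ (C.graph.Adj x s ∧ C.graph.Adj x t)) (k : Fin N) :
    φ s k = 0 ∨ φ t k = 0 := by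
  have hcard := h.1 s hs t ht
  rw [if_neg hst.1, if_neg hst.2, if_neg hx, Nat.cast_eq_zero, card_eq_zero] at hcard
  have := notMem_empty k
  simp only [← hcard, mem_inter, mem_supp] at this
  tauto

theorem exists_forall_ne_zero_iff (h : C.IsSemiStandardAtOn N φ x S) (hφ : C.IsEmbedding N φ)
    (hs : s ∈ S) (ht : t ∈ S) (hst : C.graph.Adj s t) :
    ∃ g, (∀ k, φ s k ≠ 0 ∧ φ t k ≠ 0 ↔ k = g) ∧ φ s g * φ t g = -1 := by
  obtain ⟨g, hg⟩ := card_eq_one.1 (h.card_supp_inter_of_adj hs ht hst)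
  refine ⟨g, fun k => by rw [← mem_supp, ← mem_supp, ← mem_inter, hg, mem_singleton], ?_⟩
  rw [← hφ.dotProduct_of_adj hst, dotProduct_eq_sum_of_supp_inter_subset hg.subset, sum_singleton]

theorem exists_center (h : C.IsSemiStandardAtOn N φ x S) (hφ : C.IsEmbedding N φ)
    (hx0 : ∀ k, 0 ≤ φ x k) (hx : x ∈ S) (hu₁ : u₁ ∈ S) (hu₂ : u₂ ∈ S)
    (hxu₁ : C.graph.Adj x u₁) (hxu₂ : C.graph.Adj x u₂) (hne : u₁ ≠ u₂) :
    ∃ e, φ x e = 1 ∧ φ u₁ e = -1 ∧ φ u₂ e = -1 ∧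
      ∀ k, k ≠ e → (φ x k = 0 ∨ φ u₁ k = 0) ∧ (φ x k = 0 ∨ φ u₂ k = 0) := by
  obtain ⟨e₁, he₁, hmul₁⟩ := h.exists_forall_ne_zero_iff hφ hx hu₁ hxu₁
  obtain ⟨e₂, he₂, hmul₂⟩ := h.exists_forall_ne_zero_iff hφ hx hu₂ hxu₂
  obtain ⟨e, he⟩ := card_eq_one.1 (h.2 u₁ hu₁ u₂ hu₂ hne hxu₁ hxu₂)
  have he_mem : e ∈ supp (φ u₁) ∩ supp (φ x) ∩ supp (φ u₂) := he ▸ mem_singleton_self e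
  simp only [mem_inter, mem_supp] at he_mem
  obtain ⟨⟨hu₁e, hxe⟩, hu₂e⟩ := he_mem
  obtain rfl : e = e₁ := (he₁ e).1 ⟨hxe, hu₁e⟩
  obtain rfl : e = e₂ := (he₂ e).1 ⟨hxe, hu₂e⟩
  have hxe_one : φ x e = 1 := by
    have := abs_le.1 (h.abs_le_one hφ hx e)
    have := hx0 e
    omega
  rw [hxe_one, one_mul] at hmul₁ hmul₂
  refine ⟨e, hxe_one, hmul₁, hmul₂, fun k hk => ?_⟩
  have := he₁ k
  have := he₂ k
  tauto

theorem exists_cancel (h : C.IsSemiStandardAtOn N φ x S) (hφ : C.IsEmbedding N φ)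
    (hlin : C.IsLinear) (hu₁ : u₁ ∈ S) (hu₂ : u₂ ∈ S) (hxu₁ : C.graph.Adj x u₁)
    (hxu₂ : C.graph.Adj x u₂) (hne : u₁ ≠ u₂) (he₁ : φ u₁ e = -1) (he₂ : φ u₂ e = -1) :
    ∃ f, e ≠ f ∧ φ u₁ f ≠ 0 ∧ φ u₂ f ≠ 0 ∧ φ u₁ f + φ u₂ f = 0 ∧
      ∀ k, k ≠ e → k ≠ f → φ u₁ k = 0 ∨ φ u₂ k = 0 := by
  have hsep := hlin.separated_of_two_steps hxu₁.symm hxu₂ hne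
  have hcard := h.1 u₁ hu₁ u₂ hu₂
  rw [if_neg hne, if_neg hsep.2, if_pos ⟨hxu₁, hxu₂⟩] at hcard
  have he_mem : e ∈ supp (φ u₁) ∩ supp (φ u₂) := by simp [mem_supp, he₁, he₂]
  obtain ⟨f, hf⟩ := card_eq_one.1
    ((card_erase_of_mem he_mem).trans (congrArg (· - 1) (Nat.cast_injective hcard)))
  have hinter : supp (φ u₁) ∩ supp (φ u₂) = {e, f} := by rw [← insert_erase he_mem, hf]
  have hef : e ≠ f := (ne_of_mem_erase (hf ▸ mem_singleton_self f)).symm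
  have hmem (k : Fin N) : φ u₁ k ≠ 0 ∧ φ u₂ k ≠ 0 ↔ k = e ∨ k = f := by
    rw [← mem_supp, ← mem_supp, ← mem_inter, hinter, mem_insert, mem_singleton]
  obtain ⟨hf₁, hf₂⟩ := (hmem f).2 (.inr rfl)
  refine ⟨f, hef, hf₁, hf₂, ?_, fun k hke hkf => ?_⟩
  · have hdot := hφ.dotProduct_of_separated hsep
    rw [dotProduct_eq_sum_of_supp_inter_subset hinter.subset, sum_pair hef, he₁, he₂] at hdot
    have := abs_le.1 (h.abs_le_one hφ hu₁ f)
    obtain h₁ | h₁ : φ u₁ f = 1 ∨ φ u₁ f = -1 := by omega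
    all_goals rw [h₁] at hdot ⊢; omega
  · have := hmem k
    tauto

theorem exists_isTripod (h : C.IsSemiStandardAtOn N φ x S) (hφ : C.IsEmbedding N φ)
    (hlin : C.IsLinear) (hx0 : ∀ k, 0 ≤ φ x k) (hx : x ∈ S) (hu₁ : u₁ ∈ S) (hu₂ : u₂ ∈ S)
    (hxu₁ : C.graph.Adj x u₁) (hxu₂ : C.graph.Adj x u₂) (hne : u₁ ≠ u₂) :
    ∃ e f, e ≠ f ∧ φ u₁ f ≠ 0 ∧ φ u₂ f ≠ 0 ∧ IsTripod 1 (φ x) (φ u₁) (φ u₂) e f := by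
  obtain ⟨e, hxe, he₁, he₂, hdisj⟩ := h.exists_center hφ hx0 hx hu₁ hu₂ hxu₁ hxu₂ hne
  obtain ⟨f, hef, hf₁, hf₂, hadd, hdisj'⟩ :=
    h.exists_cancel hφ hlin hu₁ hu₂ hxu₁ hxu₂ hne he₁ he₂
  exact ⟨e, f, hef, hf₁, hf₂, hxe, he₁, he₂, hadd, h.abs_le_one hφ hx,
    fun _ _ => h.abs_le_one hφ hu₁ _, fun _ _ => h.abs_le_one hφ hu₂ _,
    fun hk => (hdisj _ hk).1, fun hk => (hdisj _ hk).2, hdisj' _⟩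

theorem abs_two_mul_add_le_one (h : C.IsSemiStandardAtOn N φ x S) (hφ : C.IsEmbedding N φ)
    (hu : u ∈ S) (hy : y ∈ S) (huy : C.graph.Adj u y) (hw : C.w u = 3) (hef : e ≠ f)
    (hue : φ u e ≠ 0) (huf : φ u f ≠ 0) (hye : φ y e = 0) (hyf : φ y f = 0) {k : Fin N}
    (hke : k ≠ e) (hkf : k ≠ f) : |2 * φ u k + φ y k| ≤ 1 := by
  obtain ⟨g, hg, hmul⟩ := h.exists_forall_ne_zero_iff hφ hu hy huy
  obtain ⟨hug, hyg⟩ := (hg g).2 rfl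
  have hge : g ≠ e := by rintro rfl; exact hyg hye
  have hgf : g ≠ f := by rintro rfl; exact hyg hyf
  have hsupp : {e, f, g} = supp (φ u) := by
    refine eq_of_subset_of_card_le (by simp [insert_subset_iff, mem_supp, *]) ?_
    have := (h.card_supp hu).trans hw
    rw [card_eq_three.2 ⟨e, f, g, hef, hge.symm, hgf.symm, rfl⟩]
    omega
  have hyk := abs_le.1 (h.abs_le_one hφ hy k)
  rw [abs_le]
  by_cases hkg : k = g
  · subst hkg
    have huk := abs_le.1 (h.abs_le_one hφ hu k)
    obtain h₁ | h₁ : φ u k = 1 ∨ φ u k = -1 := by omega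
    all_goals rw [h₁] at hmul ⊢; omega
  · have huk : φ u k = 0 := by
      by_contra hne
      have := hsupp ▸ mem_supp.2 hne
      simp [hke, hkf, hkg] at this
    omega

end IsSemiStandardAtOn


/-- The vector of a neighbour of `u` other than `x`, or zero, which stands in when `u` has no such
neighbour. -/
def IsOuterVector (C : Config) (φ : C.V → Fin N → ℤ) (x u : C.V) (Y : Fin N → ℤ) : Prop :=
  Y = 0 ∨ ∃ y, C.graph.Adj u y ∧ y ≠ x ∧ Y = φ y

theorem IsOuterVector.eq_zero_or_eq_zero {x u : C.V} {Y a : Fin N → ℤ}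
    (hY : C.IsOuterVector φ x u Y)
    (ha : ∀ y, C.graph.Adj u y → y ≠ x → ∀ k, a k = 0 ∨ φ y k = 0) (k : Fin N) :
    a k = 0 ∨ Y k = 0 := by
  obtain rfl | ⟨y, huy, hyx, rfl⟩ := hY
  exacts [.inr rfl, ha y huy hyx k]

/-- The standing assumptions: `φ` embeds a linear graph, semi-standardly at the bad vertex `x` on a
bad region `S`, and signs are normalized so that `φ x` has nonnegative coordinates. -/
structure IsNormalizedAt (C : Config) (φ : C.V → Fin N → ℤ) (S : Set C.V) (x : C.V) : Prop where
  isLinear : C.IsLinear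
  localConditions : C.LocalConditions
  isEmbedding : C.IsEmbedding N φ
  isBadRegion : C.IsBadRegion S
  isBad : C.IsBad x
  isSemiStandardAtOn : C.IsSemiStandardAtOn N φ x S
  nonneg (k : Fin N) : 0 ≤ φ x k

namespace IsNormalizedAt

variable {S : Set C.V} {x u u₁ u₂ v y y₁ y₂ z : C.V} {e f : Fin N}

theorem mem (h : C.IsNormalizedAt φ S x) : x ∈ S := h.isBadRegion.mem_of_isBad h.isBad

theorem mem_of_adj (h : C.IsNormalizedAt φ S x) (hxu : C.graph.Adj x u) : u ∈ S :=
  h.isBadRegion.mem_of_isBad_of_adj h.isBad hxu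

theorem mem_of_two_steps (h : C.IsNormalizedAt φ S x) (hxu : C.graph.Adj x u)
    (huy : C.graph.Adj u y) : y ∈ S :=
  h.isBadRegion.mem_of_two_steps h.isLinear h.isBad hxu huy

theorem dotProduct_eq_zero_of_adj (h : C.IsNormalizedAt φ S x) (hv : v ∉ S)
    (hxu : C.graph.Adj x u) : φ v ⬝ᵥ φ u = 0 :=
  h.isEmbedding.dotProduct_of_separated ⟨fun hvu => hv (hvu ▸ h.mem_of_adj hxu),
    fun hvu => hv (h.mem_of_two_steps hxu hvu.symm)⟩

theorem dotProduct_eq_zero (h : C.IsNormalizedAt φ S x) (hv : v ∉ S) : φ v ⬝ᵥ φ x = 0 :=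
  h.isEmbedding.dotProduct_of_separated ⟨fun hvx => hv (hvx ▸ h.mem),
    fun hvx => hv (h.mem_of_adj hvx.symm)⟩

theorem apply_eq_zero_or_outer (h : C.IsNormalizedAt φ S x) (hxu : C.graph.Adj x u)
    (huy : C.graph.Adj u y) (hyx : y ≠ x) (k : Fin N) : φ x k = 0 ∨ φ y k = 0 :=
  h.isSemiStandardAtOn.eq_zero_or_eq_zero h.mem (h.mem_of_two_steps hxu huy)
    (h.isLinear.separated_of_two_steps hxu huy hyx.symm) (fun hxx => hxx.1.ne rfl) k

theorem neighbor_eq_zero_or_outer (h : C.IsNormalizedAt φ S x) (hxu₁ : C.graph.Adj x u₁)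
    (hxu₂ : C.graph.Adj x u₂) (hne : u₁ ≠ u₂) (huy : C.graph.Adj u₁ y) (hyx : y ≠ x)
    (k : Fin N) : φ u₂ k = 0 ∨ φ y k = 0 :=
  h.isSemiStandardAtOn.eq_zero_or_eq_zero (h.mem_of_adj hxu₂) (h.mem_of_two_steps hxu₁ huy)
    (h.isLinear.separated_of_three_steps hxu₂.symm hxu₁ huy hne.symm hyx.symm)
    (fun hxy => (h.isLinear.separated_of_two_steps hxu₁ huy hyx.symm).2 hxy.2) k

theorem outer_eq_zero_or_outer (h : C.IsNormalizedAt φ S x) (hxu₁ : C.graph.Adj x u₁)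
    (hxu₂ : C.graph.Adj x u₂) (hne : u₁ ≠ u₂) (huy₁ : C.graph.Adj u₁ y₁) (hy₁ : y₁ ≠ x)
    (huy₂ : C.graph.Adj u₂ y₂) (hy₂ : y₂ ≠ x) (k : Fin N) : φ y₁ k = 0 ∨ φ y₂ k = 0 :=
  h.isSemiStandardAtOn.eq_zero_or_eq_zero (h.mem_of_two_steps hxu₁ huy₁)
    (h.mem_of_two_steps hxu₂ huy₂)
    (h.isLinear.separated_of_four_steps huy₁.symm hxu₁.symm hxu₂ huy₂ hy₁ hne hy₂.symm)
    (fun hxy => (h.isLinear.separated_of_two_steps hxu₁ huy₁ hy₁.symm).2 hxy.1) k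

theorem exists_isOuterVector (h : C.IsNormalizedAt φ S x) (hxu₁ : C.graph.Adj x u₁)
    (hxu₂ : C.graph.Adj x u₂) (hne : u₁ ≠ u₂) (hu₁ : C.adjw u₁ = 1) (hef : e ≠ f)
    (hxe : φ x e ≠ 0) (he : φ u₁ e ≠ 0) (hf₁ : φ u₁ f ≠ 0) (hf₂ : φ u₂ f ≠ 0) :
    ∃ Y, C.IsOuterVector φ x u₁ Y ∧ ∀ k, k ≠ e → k ≠ f → |2 * φ u₁ k + Y k| ≤ 1 := by
  have hS := h.mem_of_adj hxu₁
  have hw : C.w u₁ = C.deg u₁ + 1 := by rw [adjw] at hu₁; omega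
  obtain hdeg | hdeg : C.deg u₁ = 1 ∨ C.deg u₁ = 2 := by
    have := deg_pos hxu₁.symm
    have := h.isLinear.1 u₁
    omega
  · refine ⟨0, .inl rfl, fun k hke hkf => ?_⟩
    have hsupp : {e, f} = supp (φ u₁) := by
      refine eq_of_subset_of_card_le (by simp [insert_subset_iff, mem_supp, *]) ?_
      have := h.isSemiStandardAtOn.card_supp hS
      rw [card_pair hef]
      omega
    have huk : φ u₁ k = 0 := by
      by_contra hne
      have := hsupp ▸ mem_supp.2 hne
      simp [hke, hkf] at this
    simp [huk]
  · obtain ⟨y, huy, hyx⟩ := exists_adj_ne hdeg x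
    exact ⟨φ y, .inr ⟨y, huy, hyx, rfl⟩, fun k => h.isSemiStandardAtOn.abs_two_mul_add_le_one
      h.isEmbedding hS (h.mem_of_two_steps hxu₁ huy) huy (by omega) hef he hf₁
      ((h.apply_eq_zero_or_outer hxu₁ huy hyx e).resolve_left hxe)
      ((h.neighbor_eq_zero_or_outer hxu₁ hxu₂ hne huy hyx f).resolve_left hf₂)⟩

theorem exists_isTripod_two (h : C.IsNormalizedAt φ S x) (hxu₁ : C.graph.Adj x u₁)
    (hxu₂ : C.graph.Adj x u₂) (hne : u₁ ≠ u₂) (hu₁ : C.adjw u₁ = 1) (hu₂ : C.adjw u₂ = 1)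
    (hef : e ≠ f) (hf₁ : φ u₁ f ≠ 0) (hf₂ : φ u₂ f ≠ 0)
    (htri : IsTripod 1 (φ x) (φ u₁) (φ u₂) e f) :
    ∃ Y₁ Y₂, C.IsOuterVector φ x u₁ Y₁ ∧ C.IsOuterVector φ x u₂ Y₂ ∧
      IsTripod 2 (φ x) ((2 : ℤ) • φ u₁ + Y₁) ((2 : ℤ) • φ u₂ + Y₂) e f := by
  have hxe : φ x e ≠ 0 := by simp [htri.apply_center]
  obtain ⟨Y₁, hY₁, hle₁⟩ := h.exists_isOuterVector hxu₁ hxu₂ hne hu₁ hef hxe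
    (by simp [htri.apply_center₁]) hf₁ hf₂
  obtain ⟨Y₂, hY₂, hle₂⟩ := h.exists_isOuterVector hxu₂ hxu₁ hne.symm hu₂ hef hxe
    (by simp [htri.apply_center₂]) hf₂ hf₁
  refine ⟨Y₁, Y₂, hY₁, hY₂, htri.double hf₁ hf₂ ?_ ?_ ?_ ?_ ?_ hle₁ hle₂⟩
  · exact hY₁.eq_zero_or_eq_zero fun _ => h.apply_eq_zero_or_outer hxu₁
  · exact hY₂.eq_zero_or_eq_zero fun _ => h.apply_eq_zero_or_outer hxu₂
  · exact hY₁.eq_zero_or_eq_zero fun _ => h.neighbor_eq_zero_or_outer hxu₁ hxu₂ hne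
  · exact hY₂.eq_zero_or_eq_zero fun _ => h.neighbor_eq_zero_or_outer hxu₂ hxu₁ hne.symm
  · exact hY₂.eq_zero_or_eq_zero fun y₂ huy₂ hy₂ k => .symm <| hY₁.eq_zero_or_eq_zero
      (fun _ huy₁ hy₁ => h.outer_eq_zero_or_outer hxu₂ hxu₁ hne.symm huy₂ hy₂ huy₁ hy₁) k

theorem dotProduct_outer_eq_zero (h : C.IsNormalizedAt φ S x) (hv : v ∉ S)
    (hxu : C.graph.Adj x u) {Y : Fin N → ℤ} (hY : C.IsOuterVector φ x u Y) : φ v ⬝ᵥ Y = 0 := by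
  obtain rfl | ⟨y, huy, -, rfl⟩ := hY
  · exact dotProduct_zero _
  · exact h.isEmbedding.dotProduct_of_separated
      ⟨fun hvy => hv (hvy ▸ h.mem_of_two_steps hxu huy),
        fun hvy => hv (h.isBadRegion.mem_of_three_steps h.isLinear h.isBad hxu huy hvy.symm)⟩

theorem apply_center_eq_zero (h : C.IsNormalizedAt φ S x) (hxu₁ : C.graph.Adj x u₁)
    (hxu₂ : C.graph.Adj x u₂) (hne : u₁ ≠ u₂) (hef : e ≠ f) (hf₁ : φ u₁ f ≠ 0)
    (hf₂ : φ u₂ f ≠ 0) (htri : IsTripod 1 (φ x) (φ u₁) (φ u₂) e f) (hv : v ∉ S) :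
    φ v e = 0 := by
  have hw := h.isLinear.w_le v
  have hvx := h.dotProduct_eq_zero hv
  have hvu₁ := h.dotProduct_eq_zero_of_adj hv hxu₁
  have hvu₂ := h.dotProduct_eq_zero_of_adj hv hxu₂
  have hself := h.isEmbedding.dotProduct_self v
  by_cases hle : C.adjw v ≤ 1
  · exact htri.apply_center_eq_zero hvx hvu₁ hvu₂ (by omega)
  · have adjw_eq_one {u : C.V} (hxu : C.graph.Adj x u) : C.adjw u = 1 := by
      have := (h.isBad.exists_adj_ne_of_adj h.isLinear hxu).1
      by_contra hu
      exact hv (h.localConditions.eq_of_one_lt_adjw (u := u) (by omega) (not_le.1 hle) ▸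
        h.mem_of_adj hxu)
    obtain ⟨Y₁, Y₂, hY₁, hY₂, htwo⟩ := h.exists_isTripod_two hxu₁ hxu₂ hne (adjw_eq_one hxu₁)
      (adjw_eq_one hxu₂) hef hf₁ hf₂ htri
    have := h.localConditions.adjw_le_three v
    refine htwo.apply_center_eq_zero hvx ?_ ?_ (by omega)
    · rw [dotProduct_add, dotProduct_smul, hvu₁, h.dotProduct_outer_eq_zero hv hxu₁ hY₁,
        smul_zero, add_zero]
    · rw [dotProduct_add, dotProduct_smul, hvu₂, h.dotProduct_outer_eq_zero hv hxu₂ hY₂,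
        smul_zero, add_zero]

end IsNormalizedAt


/-! ### Stray vertices -/

/-- `G` is a set of coordinates private to `x`: they are avoided by the other vertices of `S`,
and the coordinates in `G` of every vertex outside `S` sum to zero. -/
structure IsPrivateSet (C : Config) (φ : C.V → Fin N → ℤ) (S : Set C.V) (x : C.V)
    (G : Finset (Fin N)) : Prop extends C.IsNormalizedAt φ S x where
  eq_zero_of_mem {y : C.V} : y ∈ S → y ≠ x → ∀ k ∈ G, φ y k = 0
  sum_eq_zero {y : C.V} : y ∉ S → ∑ k ∈ G, φ y k = 0

/-- A vertex outside `S` that uses the coordinates in `G`; the tail `r` is what remains of it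
outside `G`. -/
structure IsStray (C : Config) (φ : C.V → Fin N → ℤ) (S : Set C.V) (G : Finset (Fin N)) (v : C.V)
    (r : Fin N → ℤ) : Prop where
  notMem : v ∉ S
  isRootWithTail : IsRootWithTail G (φ v) r

variable {S : Set C.V} {x : C.V} {G : Finset (Fin N)}

namespace IsNormalizedAt

variable {e f : Fin N} {u₁ u₂ v y z : C.V}

theorem card_erase_supp (h : C.IsNormalizedAt φ S x) (he : φ x e ≠ 0) :
    (#((supp (φ x)).erase e) : ℤ) = C.adjw x + 1 := by
  rw [cast_card_erase_of_mem (mem_supp.2 he), h.isSemiStandardAtOn.card_supp h.mem, adjw,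
    h.isBad.deg_eq_two h.isLinear]
  push_cast
  ring

theorem isPrivateSet (h : C.IsNormalizedAt φ S x) (hxu₁ : C.graph.Adj x u₁)
    (hxu₂ : C.graph.Adj x u₂) (hne : u₁ ≠ u₂) (htri : IsTripod 1 (φ x) (φ u₁) (φ u₂) e f)
    (hcenter : ∀ v ∉ S, φ v e = 0) : C.IsPrivateSet φ S x ((supp (φ x)).erase e) where
  toIsNormalizedAt := h
  eq_zero_of_mem {y} hy hyx k hk := by
    obtain ⟨hke, hxk⟩ := mem_erase.1 hk
    rw [mem_supp] at hxk
    by_cases hxy : C.graph.Adj x y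
    · rcases h.isLinear.eq_or_eq_of_adj hne hxu₁ hxu₂ hxy with rfl | rfl
      · exact (htri.disjoint₁ hke).resolve_left hxk
      · exact (htri.disjoint₂ hke).resolve_left hxk
    · exact (h.isSemiStandardAtOn.eq_zero_or_eq_zero h.mem hy ⟨hyx.symm, hxy⟩
        (fun hxx => hxx.1.ne rfl) k).resolve_left hxk
  sum_eq_zero {y} hy := by
    have apply_eq_one : ∀ k ∈ supp (φ x), φ x k = 1 := fun k hk => by
      have := abs_le.1 (h.isSemiStandardAtOn.abs_le_one h.isEmbedding h.mem k)
      have := h.nonneg k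
      have := mem_supp.1 hk
      omega
    rw [sum_erase _ (hcenter y hy), sum_supp_eq_dotProduct apply_eq_one, dotProduct_comm,
      h.dotProduct_eq_zero hy]

theorem exists_isPrivateSet (h : C.IsNormalizedAt φ S x) :
    ∃ G, C.IsPrivateSet φ S x G ∧ #G = C.adjw x + 1 ∧
      ∀ v ∉ S, (supp (φ v) ∩ supp (φ x)).Nonempty → ∃ k ∈ G, φ v k ≠ 0 := by
  obtain ⟨u₁, u₂, hne, hxu₁, hxu₂, -⟩ := h.isBad
  obtain ⟨e, f, hef, hf₁, hf₂, htri⟩ := h.isSemiStandardAtOn.exists_isTripod h.isEmbedding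
    h.isLinear h.nonneg h.mem (h.mem_of_adj hxu₁) (h.mem_of_adj hxu₂) hxu₁ hxu₂ hne
  have hcenter (v : C.V) (hv : v ∉ S) : φ v e = 0 :=
    h.apply_center_eq_zero hxu₁ hxu₂ hne hef hf₁ hf₂ htri hv
  refine ⟨_, h.isPrivateSet hxu₁ hxu₂ hne htri hcenter,
    h.card_erase_supp (by simp [htri.apply_center]), fun v hv ⟨k, hk⟩ => ?_⟩
  obtain ⟨hvk, hxk⟩ := mem_inter.1 hk
  rw [mem_supp] at hvk
  exact ⟨k, mem_erase.2 ⟨by rintro rfl; exact hvk (hcenter v hv), hxk⟩, hvk⟩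

theorem adjw_le_one (h : C.IsNormalizedAt φ S x) (hx : 0 < C.adjw x) (hyx : y ≠ x)
    (hxy : ¬ C.graph.Adj x y) : C.adjw y ≤ 1 := by
  by_contra! hy
  have := h.localConditions.adjw_le_two_of_isBad h.isBad
  obtain hx | hx : C.adjw x = 1 ∨ C.adjw x = 2 := by omega
  · exact hxy (h.localConditions.adj_of_one_lt_adjw h.isBad hx hy)
  · exact hyx (h.localConditions.eq_of_one_lt_adjw hy (by omega))

theorem ne_of_adj (h : C.IsNormalizedAt φ S x) (hv : v ∉ S) (hvz : C.graph.Adj v z) : z ≠ x := by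
  rintro rfl
  exact hv (h.mem_of_adj hvz.symm)

theorem not_adj_of_adj (h : C.IsNormalizedAt φ S x) (hv : v ∉ S) (hvz : C.graph.Adj v z) :
    ¬ C.graph.Adj x z :=
  fun hxz => hv (h.mem_of_two_steps hxz hvz.symm)

theorem ne_of_two_steps (h : C.IsNormalizedAt φ S x) (hv : v ∉ S) (hvz : C.graph.Adj v z)
    (hzy : C.graph.Adj z y) : y ≠ x := by
  rintro rfl
  exact h.not_adj_of_adj hv hvz hzy.symm

theorem adjw_eq_zero_of_not_pos (h : C.IsNormalizedAt φ S x) (hy : ¬ 0 < C.adjw y) :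
    C.adjw y = 0 :=
  (not_lt.1 hy).antisymm (h.isLinear.adjw_nonneg (h.localConditions.two_le_w y))

end IsNormalizedAt

namespace IsPrivateSet

variable {r r' : Fin N → ℤ} {v v' y z z₁ z₂ : C.V}

theorem eq_zero_or_isStray (h : C.IsPrivateSet φ S x G) (hx : 0 < C.adjw x) (hyx : y ≠ x) :
    (∀ k ∈ G, φ y k = 0) ∨ ∃ r, C.IsStray φ S G y r := by
  by_cases hy : y ∈ S
  · exact .inl (h.eq_zero_of_mem hy hyx)
  refine or_iff_not_imp_left.2 fun hne => ?_
  push Not at hne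
  have := h.adjw_le_one hx hyx fun hxy => hy (h.mem_of_adj hxy)
  have := h.isLinear.w_le y
  have := h.isEmbedding.dotProduct_self y
  obtain ⟨r, hr⟩ := exists_isRootWithTail (h.sum_eq_zero hy) hne (by omega)
  exact ⟨r, hy, hr⟩

theorem w_eq (h : C.IsPrivateSet φ S x G) (hv : C.IsStray φ S G v r) : C.w v = 2 + r ⬝ᵥ r :=
  (h.isEmbedding.dotProduct_self v).symm.trans hv.isRootWithTail.dotProduct_self

theorem adjw_le_one_of_isStray (h : C.IsPrivateSet φ S x G) (hx : 0 < C.adjw x)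
    (hv : C.IsStray φ S G v r) : C.adjw v ≤ 1 :=
  h.adjw_le_one hx (fun hvx => hv.notMem (hvx ▸ h.mem)) fun hxv => hv.notMem (h.mem_of_adj hxv)

theorem tail_dotProduct_self_le_one (h : C.IsPrivateSet φ S x G) (hx : 0 < C.adjw x)
    (hv : C.IsStray φ S G v r) : r ⬝ᵥ r ≤ 1 := by
  have := h.adjw_le_one_of_isStray hx hv
  have := h.isLinear.w_le v
  have := h.w_eq hv
  omega

theorem adjw_eq_one_and_deg_eq_two (h : C.IsPrivateSet φ S x G) (hx : 0 < C.adjw x)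
    (hv : C.IsStray φ S G v r) (hr : r ≠ 0) :
    r ⬝ᵥ r = 1 ∧ C.adjw v = 1 ∧ C.deg v = 2 := by
  have : 0 < r ⬝ᵥ r := (dotProduct_self_star_nonneg r).lt_of_ne' (mt dotProduct_self_eq_zero.1 hr)
  have := h.tail_dotProduct_self_le_one hx hv
  have := h.w_eq hv
  have := h.adjw_le_one_of_isStray hx hv
  have := h.isLinear.1 v
  rw [adjw] at *
  omega

theorem exists_isStray_of_tail_eq_zero (h : C.IsPrivateSet φ S x G) (hx : 0 < C.adjw x)
    (hv : C.IsStray φ S G v 0) (hvz : C.graph.Adj v z) : ∃ r, C.IsStray φ S G z r := by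
  refine (h.eq_zero_or_isStray hx (h.ne_of_adj hv.notMem hvz)).resolve_left fun hz => ?_
  have hdot := hv.isRootWithTail.dotProduct_eq_of_forall_eq_zero hz
  rw [h.isEmbedding.dotProduct_of_adj hvz, zero_dotProduct] at hdot
  omega

theorem deg_pos_of_isStray (h : C.IsPrivateSet φ S x G) (hx : 0 < C.adjw x)
    (hv : C.IsStray φ S G v r) : 0 < C.deg v := by
  have := h.adjw_le_one_of_isStray hx hv
  have := h.localConditions.two_le_w v
  rw [adjw] at *
  omega

theorem tail_eq_or_eq_neg (h : C.IsPrivateSet φ S x G) (hx : 0 < C.adjw x)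
    (hv : C.IsStray φ S G v r) (hv' : C.IsStray φ S G v' r') (hrr' : r ⬝ᵥ r' ≠ 0) :
    r' = r ∨ r' = -r :=
  eq_or_eq_neg_of_dotProduct_ne_zero (h.tail_dotProduct_self_le_one hx hv)
    (h.tail_dotProduct_self_le_one hx hv') hrr'

theorem dotProduct_ne_zero_of_isStray (h : C.IsPrivateSet φ S x G) (hx : 0 < C.adjw x)
    (hG : #G ≤ 2) (hv : C.IsStray φ S G v r) (hv' : C.IsStray φ S G v' r') :
    φ v ⬝ᵥ φ v' ≠ 0 := by
  intro hdot
  have hrr' := hv.isRootWithTail.dotProduct_eq_of_card_le_two hG hv'.isRootWithTail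
  have := h.tail_dotProduct_self_le_one hx hv
  have : 0 ≤ r ⬝ᵥ r := dotProduct_self_star_nonneg r
  rcases h.tail_eq_or_eq_neg hx hv hv' (by omega) with rfl | rfl
  · omega
  · rw [dotProduct_neg] at hrr'
    omega

theorem tail_eq_of_adj (h : C.IsPrivateSet φ S x G) (hx : 0 < C.adjw x) (hG : #G ≤ 2)
    (hv : C.IsStray φ S G v r) (hz : C.IsStray φ S G z r') (hvz : C.graph.Adj v z) :
    r' = r ∧ r ≠ 0 := by
  have hdot := hv.isRootWithTail.dotProduct_eq_of_card_le_two hG hz.isRootWithTail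
  rw [h.isEmbedding.dotProduct_of_adj hvz] at hdot
  have hne : r ≠ 0 := by rintro rfl; rw [zero_dotProduct] at hdot; omega
  have := h.tail_dotProduct_self_le_one hx hv
  refine ⟨(h.tail_eq_or_eq_neg hx hv hz (by omega)).resolve_right ?_, hne⟩
  rintro rfl
  rw [dotProduct_neg] at hdot
  have : 0 ≤ r ⬝ᵥ r := dotProduct_self_star_nonneg r
  omega

theorem not_adj_of_isStray (h : C.IsPrivateSet φ S x G) (hx : 0 < C.adjw x) (hG : #G ≤ 2)
    (hv : C.IsStray φ S G v r) (hz : C.IsStray φ S G z r') : ¬ C.graph.Adj v z := by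
  intro hvz
  obtain ⟨rfl, hr⟩ := h.tail_eq_of_adj hx hG hv hz hvz
  obtain ⟨y, hzy, hyv⟩ := exists_adj_ne (h.adjw_eq_one_and_deg_eq_two hx hz hr).2.2 v
  have hvy := h.isEmbedding.dotProduct_of_separated
    (h.isLinear.separated_of_two_steps hvz hzy hyv.symm)
  rcases h.eq_zero_or_isStray hx (h.ne_of_two_steps hv.notMem hvz hzy) with hy | ⟨s, hy⟩
  · have hzy' := h.isEmbedding.dotProduct_of_adj hzy
    rw [hv.isRootWithTail.dotProduct_eq_of_forall_eq_zero hy] at hvy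
    rw [hz.isRootWithTail.dotProduct_eq_of_forall_eq_zero hy] at hzy'
    omega
  · exact h.dotProduct_ne_zero_of_isStray hx hG hv hy hvy

theorem tail_dotProduct_eq_zero_of_two_steps (h : C.IsPrivateSet φ S x G) (hx : 0 < C.adjw x)
    (hG : #G ≤ 2) (hv : C.IsStray φ S G v r) (hvz : C.graph.Adj v z) (hzy : C.graph.Adj z y)
    (hyv : y ≠ v) : r ⬝ᵥ φ y = 0 := by
  have hdot := h.isEmbedding.dotProduct_of_separated
    (h.isLinear.separated_of_two_steps hvz hzy hyv.symm)
  have hy := (h.eq_zero_or_isStray hx (h.ne_of_two_steps hv.notMem hvz hzy)).resolve_right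
    fun ⟨_, hy⟩ => h.dotProduct_ne_zero_of_isStray hx hG hv hy hdot
  rwa [hv.isRootWithTail.dotProduct_eq_of_forall_eq_zero hy] at hdot

theorem tail_dotProduct_of_adj (h : C.IsPrivateSet φ S x G) (hx : 0 < C.adjw x) (hG : #G ≤ 2)
    (hv : C.IsStray φ S G v r) (hvz : C.graph.Adj v z) : r ⬝ᵥ φ z = -1 := by
  have hz := (h.eq_zero_or_isStray hx (h.ne_of_adj hv.notMem hvz)).resolve_right
    fun ⟨_, hz⟩ => h.not_adj_of_isStray hx hG hv hz hvz
  rw [← hv.isRootWithTail.dotProduct_eq_of_forall_eq_zero hz, h.isEmbedding.dotProduct_of_adj hvz]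

theorem exists_combination_eq_zero (h : C.IsPrivateSet φ S x G) (hx : 0 < C.adjw x)
    (hG : #G ≤ 2) (hv : C.IsStray φ S G v r) (hr : r ≠ 0) (hvz₁ : C.graph.Adj v z₁)
    (hvz₂ : C.graph.Adj v z₂) (hne : z₁ ≠ z₂) (hz₁ : C.adjw z₁ = 0) :
    C.w z₂ = 3 ∧ ∃ y, C.graph.Adj z₁ y ∧ y ≠ v ∧
      φ z₂ + (2 : ℤ) • φ z₁ + φ y + (3 : ℤ) • r = 0 := by
  have self := h.isEmbedding.dotProduct_self
  have w_deg {s : C.V} := h.isLinear.w_eq_two_and_deg_eq_two (h.localConditions.two_le_w s)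
  obtain ⟨hrr, hv1, -⟩ := h.adjw_eq_one_and_deg_eq_two hx hv hr
  obtain ⟨y, hz₁y, hyv⟩ := exists_adj_ne (w_deg hz₁).2 v
  have hy : C.adjw y = 0 := h.adjw_eq_zero_of_not_pos fun hy => hv.notMem <|
    h.isBadRegion.mem_of_isBad_of_adj ⟨y, v, hyv, hz₁y, hvz₁.symm, hy, by omega⟩ hvz₁.symm
  have hwz₂ : φ z₂ ⬝ᵥ φ z₂ ≤ 3 := by
    have := h.adjw_le_one hx (h.ne_of_adj hv.notMem hvz₂) (h.not_adj_of_adj hv.notMem hvz₂)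
    have := h.isLinear.w_le z₂
    rw [self]
    omega
  obtain ⟨hz₂, hcombination⟩ := add_two_smul_add_add_three_smul_eq_zero hrr
    (h.tail_dotProduct_of_adj hx hG hv hvz₁) (h.tail_dotProduct_of_adj hx hG hv hvz₂)
    (h.tail_dotProduct_eq_zero_of_two_steps hx hG hv hvz₁ hz₁y hyv)
    ((self z₁).trans (w_deg hz₁).1) ((self y).trans (w_deg hy).1) hwz₂
    (h.isEmbedding.dotProduct_of_separated (h.isLinear.separated_of_two_steps hvz₁.symm hvz₂ hne))
    (h.isEmbedding.dotProduct_of_adj hz₁y.symm)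
    (h.isEmbedding.dotProduct_of_separated
      (h.isLinear.separated_of_three_steps hz₁y.symm hvz₁.symm hvz₂ hyv hne))
  exact ⟨(self z₂).symm.trans hz₂, y, hz₁y, hyv, hcombination⟩

theorem adjw_neighbor_ne_zero (h : C.IsPrivateSet φ S x G) (hx : 0 < C.adjw x) (hG : #G ≤ 2)
    (hv : C.IsStray φ S G v r) (hr : r ≠ 0) (hvz₁ : C.graph.Adj v z₁) (hvz₂ : C.graph.Adj v z₂)
    (hne : z₁ ≠ z₂) : C.adjw z₁ ≠ 0 := by
  intro hz₁
  obtain ⟨hwz₂, y, hz₁y, hyv, hcombination⟩ :=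
    h.exists_combination_eq_zero hx hG hv hr hvz₁ hvz₂ hne hz₁
  have hdz₂ : C.deg z₂ = 2 := by
    have hz₂ := h.adjw_le_one hx (h.ne_of_adj hv.notMem hvz₂) (h.not_adj_of_adj hv.notMem hvz₂)
    have := h.isLinear.1 z₂
    rw [adjw] at hz₂
    omega
  obtain ⟨s, hz₂s, hsv⟩ := exists_adj_ne hdz₂ v
  have hs := congrArg (· ⬝ᵥ φ s) hcombination
  simp only [add_dotProduct, smul_dotProduct, zero_dotProduct,
    h.isEmbedding.dotProduct_of_adj hz₂s,
    h.tail_dotProduct_eq_zero_of_two_steps hx hG hv hvz₂ hz₂s hsv,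
    h.isEmbedding.dotProduct_of_separated
      (h.isLinear.separated_of_three_steps hvz₁.symm hvz₂ hz₂s hne hsv.symm),
    h.isEmbedding.dotProduct_of_separated
      (h.isLinear.separated_of_four_steps hz₁y.symm hvz₁.symm hvz₂ hz₂s hyv hne hsv.symm)] at hs
  norm_num at hs

theorem not_isStray_of_card_le_two (h : C.IsPrivateSet φ S x G) (hx : 0 < C.adjw x)
    (hG : #G ≤ 2) : ¬ C.IsStray φ S G v r := by
  intro hv
  obtain ⟨z₁, hvz₁⟩ := exists_adj (h.deg_pos_of_isStray hx hv)
  have hr : r ≠ 0 := by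
    rintro rfl
    obtain ⟨_, hz₁⟩ := h.exists_isStray_of_tail_eq_zero hx hv hvz₁
    exact h.not_adj_of_isStray hx hG hv hz₁ hvz₁
  obtain ⟨z₂, hvz₂, hne⟩ := exists_adj_ne (h.adjw_eq_one_and_deg_eq_two hx hv hr).2.2 z₁
  have pos₁ := not_imp_comm.1 h.adjw_eq_zero_of_not_pos
    (h.adjw_neighbor_ne_zero hx hG hv hr hvz₁ hvz₂ hne.symm)
  have pos₂ := not_imp_comm.1 h.adjw_eq_zero_of_not_pos
    (h.adjw_neighbor_ne_zero hx hG hv hr hvz₂ hvz₁ hne)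
  exact hv.notMem (h.isBadRegion.mem_of_isBad ⟨z₁, z₂, hne.symm, hvz₁, hvz₂, pos₁, pos₂⟩)

theorem tail_dotProduct_ne_zero_of_two_steps (h : C.IsPrivateSet φ S x G) (hG : #G ≤ 3)
    (hv : C.IsStray φ S G v r) (hy : C.IsStray φ S G y r') (hvz : C.graph.Adj v z)
    (hzy : C.graph.Adj z y) (hvy : v ≠ y) : r ⬝ᵥ r' ≠ 0 :=
  hv.isRootWithTail.dotProduct_tails_ne_zero hG hy.isRootWithTail
    (h.isEmbedding.dotProduct_of_separated (h.isLinear.separated_of_two_steps hvz hzy hvy))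

theorem w_eq_two_and_deg_eq_two_of_adj (h : C.IsPrivateSet φ S x G) (hx : C.adjw x = 2)
    (hv : C.IsStray φ S G v r) (hv1 : C.adjw v = 1) (hvz : C.graph.Adj v z) :
    C.w z = 2 ∧ C.deg z = 2 := by
  refine h.isLinear.w_eq_two_and_deg_eq_two (h.localConditions.two_le_w z)
    (h.adjw_eq_zero_of_not_pos fun hz => ?_)
  have hxz := h.not_adj_of_adj hv.notMem hvz
  have := h.adjw_le_one (by omega) (h.ne_of_adj hv.notMem hvz) hxz
  rcases h.localConditions.adj_or_adj_of_adjw_eq_one h.isBad hx hvz hv1 (by omega) with hxv | hxz'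
  exacts [hv.notMem (h.mem_of_adj hxv), hxz hxz']

theorem tail_ne_zero (h : C.IsPrivateSet φ S x G) (hx : C.adjw x = 2) (hG : #G ≤ 3)
    (hv : C.IsStray φ S G v r) : r ≠ 0 := by
  rintro rfl
  have hx_pos : 0 < C.adjw x := by omega
  obtain ⟨z, hvz⟩ := exists_adj (h.deg_pos_of_isStray hx_pos hv)
  obtain ⟨s, hz⟩ := h.exists_isStray_of_tail_eq_zero hx_pos hv hvz
  have hw := h.w_eq hv
  rw [zero_dotProduct] at hw
  by_cases hdeg : C.deg v = 2
  · obtain ⟨z', hvz', hne⟩ := exists_adj_ne hdeg z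
    obtain ⟨s', hz'⟩ := h.exists_isStray_of_tail_eq_zero hx_pos hv hvz'
    have hss' := h.tail_dotProduct_ne_zero_of_two_steps hG hz hz' hvz.symm hvz' hne.symm
    have hs := (h.adjw_eq_one_and_deg_eq_two hx_pos hz fun h0 => hss' (by simp [h0])).2.1
    have hs' := (h.adjw_eq_one_and_deg_eq_two hx_pos hz' fun h0 => hss' (by simp [h0])).2.1
    exact hv.notMem
      (h.isBadRegion.mem_of_isBad ⟨z, z', hne.symm, hvz, hvz', by omega, by omega⟩)
  · have hv1 : C.adjw v = 1 := by
      have := deg_pos hvz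
      have := h.isLinear.1 v
      rw [adjw]
      omega
    obtain ⟨hwz, hdz⟩ := h.w_eq_two_and_deg_eq_two_of_adj hx hv hv1 hvz
    have hws := h.w_eq hz
    obtain rfl : s = 0 := dotProduct_self_eq_zero.1 (by omega)
    obtain ⟨y, hzy, hyv⟩ := exists_adj_ne hdz v
    obtain ⟨t, hy⟩ := h.exists_isStray_of_tail_eq_zero hx_pos hz hzy
    exact h.tail_dotProduct_ne_zero_of_two_steps hG hv hy hvz hzy hyv.symm (zero_dotProduct t)

theorem not_isStray_of_card_le_three (h : C.IsPrivateSet φ S x G) (hx : C.adjw x = 2)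
    (hG : #G ≤ 3) : ¬ C.IsStray φ S G v r := by
  intro hv
  have hx_pos : 0 < C.adjw x := by omega
  have self := h.isEmbedding.dotProduct_self
  obtain ⟨hrr, hv1, hdeg⟩ := h.adjw_eq_one_and_deg_eq_two hx_pos hv (h.tail_ne_zero hx hG hv)
  obtain ⟨z₁, hvz₁⟩ := exists_adj (deg_pos_of_isStray h hx_pos hv)
  obtain ⟨z₂, hvz₂, hne⟩ := exists_adj_ne hdeg z₁
  have tail_dot {z : C.V} (hvz : C.graph.Adj v z) : r ⬝ᵥ φ z = -1 := by
    rcases h.eq_zero_or_isStray hx_pos (h.ne_of_adj hv.notMem hvz) with hz | ⟨s, hz⟩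
    · rw [← hv.isRootWithTail.dotProduct_eq_of_forall_eq_zero hz,
        h.isEmbedding.dotProduct_of_adj hvz]
    · have := h.w_eq hz
      have := (h.w_eq_two_and_deg_eq_two_of_adj hx hv hv1 hvz).1
      exact absurd (dotProduct_self_eq_zero.1 (by omega)) (h.tail_ne_zero hx hG hz)
  obtain ⟨hwz₁, hdz₁⟩ := h.w_eq_two_and_deg_eq_two_of_adj hx hv hv1 hvz₁
  obtain ⟨hwz₂, -⟩ := h.w_eq_two_and_deg_eq_two_of_adj hx hv hv1 hvz₂
  have hcombination := add_add_two_smul_eq_zero hrr (tail_dot hvz₁) (tail_dot hvz₂)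
    ((self z₁).trans hwz₁) ((self z₂).trans hwz₂) (h.isEmbedding.dotProduct_of_separated
      (h.isLinear.separated_of_two_steps hvz₁.symm hvz₂ hne.symm))
  obtain ⟨y, hz₁y, hyv⟩ := exists_adj_ne hdz₁ v
  have hy := congrArg (· ⬝ᵥ φ y) hcombination
  simp only [add_dotProduct, smul_dotProduct, smul_eq_mul, zero_dotProduct,
    h.isEmbedding.dotProduct_of_adj hz₁y, h.isEmbedding.dotProduct_of_separated
      (h.isLinear.separated_of_three_steps hvz₂.symm hvz₁ hz₁y hne hyv.symm)] at hy
  omega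

theorem eq_zero_of_notMem (h : C.IsPrivateSet φ S x G) (hG : #G = C.adjw x + 1) (hv : v ∉ S) :
    ∀ k ∈ G, φ v k = 0 := by
  have hvx : v ≠ x := by rintro rfl; exact hv h.mem
  have := h.localConditions.adjw_le_two_of_isBad h.isBad
  have := h.isLinear.adjw_nonneg (h.localConditions.two_le_w x)
  obtain hx | hx | hx : C.adjw x = 0 ∨ C.adjw x = 1 ∨ C.adjw x = 2 := by omega
  · obtain ⟨g, rfl⟩ := card_eq_one.1 (show #G = 1 by omega)
    simpa using h.sum_eq_zero hv
  · exact (h.eq_zero_or_isStray (by omega) hvx).resolve_right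
      fun ⟨_, hr⟩ => h.not_isStray_of_card_le_two (by omega) (by omega) hr
  · exact (h.eq_zero_or_isStray (by omega) hvx).resolve_right
      fun ⟨_, hr⟩ => h.not_isStray_of_card_le_three hx (by omega) hr

end IsPrivateSet

end Config

theorem statement5_general (C : Config) (hlin : C.IsLinear) (hloc : C.LocalConditions) (N : ℕ)
    (φ : C.V → Fin N → ℤ) (hφ : C.IsEmbedding N φ) (S : Set C.V) (hS : C.IsBadRegion S)
    (x : C.V) (hx : C.IsBad x) (hss : C.IsSemiStandardAtOn N φ x S) (v : C.V) (hvx : v ≠ x)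
    (hsupp : (supp (φ v) ∩ supp (φ x)).Nonempty) : C.graph.Adj v x := by
  by_contra hadj
  have hv : v ∉ S := fun hv => by
    obtain ⟨k, hk⟩ := hsupp
    simp only [mem_inter, mem_supp] at hk
    exact (hss.eq_zero_or_eq_zero hv (hS.mem_of_isBad hx) ⟨hvx, hadj⟩
      (fun hxx => hxx.2.ne rfl) k).elim hk.1 hk.2
  obtain ⟨ψ, hψ, hψ_supp, hψ_nonneg⟩ := hφ.exists_nonneg x
  have hnorm : C.IsNormalizedAt ψ S x :=
    ⟨hlin, hloc, hψ, hS, hx, hss.of_supp_eq hψ_supp, hψ_nonneg⟩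
  obtain ⟨G, hG, hcard, hmeet⟩ := hnorm.exists_isPrivateSet
  obtain ⟨k, hkG, hk⟩ := hmeet v hv (by simpa only [hψ_supp] using hsupp)
  exact hk (hG.eq_zero_of_notMem hcard hv k hkG)

/-- Lemma 5.4: if the extended bad part is embedded semi-standardly at `x`, then any
vertex whose support meets that of `x` is adjacent to `x`. -/
theorem statement5 (C : Config) (hlin : C.IsLinear) (hwc : C.WorkingConditions)
    (hbad : ∃ y : C.V, C.IsBad y) (N : ℕ) (φ : C.V → Fin N → ℤ)
    (hφ : C.IsEmbedding N φ) (m : ℕ) (vc : ℕ → C.V) (hebp : C.IsExtBadPart m vc)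
    (x : C.V) (hx : C.IsBad x)
    (hss : C.IsSemiStandardAtOn N φ x (C.ebpSet m vc))
    (v : C.V) (hvx : v ≠ x) (hsupp : (supp (φ v) ∩ supp (φ x)).Nonempty) :
    C.graph.Adj v x := by
  exact statement5_general C hlin hwc.localConditions N φ hφ _ (hebp.1.isBadRegion hlin hwc) x hx
    hss v hvx hsupp

end LensPaper
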